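/- arXiv:1010.5769 — 4 statements merged into one kernel-verified Lean document; each statement's English description precedes it below -/
import Mathlib

section
/- For every complex number q with |q| < 1 and every complex number x, the identity 2·∑_{n=0}^∞ T_{2n+1}(x/2)·q^{n²+n} = (∏_{m=1}^∞ (1 − q^{2m}))³ · ∑_{k=0}^∞ A_k(q²)·x^{2k+1} holds, where both sides converge absolutely. -/
/-- MacMahon's generalized sum-of-divisors function `A_k(q)`, defined as the sum over all
strictly increasing `k`-tuples of positive integers. -/
noncomputable def macA (k : ℕ) (q : ℂ) : ℂ :=
  ∑' m : {m : Fin k → ℕ // StrictMono m ∧ ∀ i, 0 < m i},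
    q ^ (∑ i, m.1 i) / ∏ i, (1 - q ^ m.1 i) ^ 2

open Filter Topology Finset

namespace Mac

/-- `P Q n = ∏_{i<n} (1 - Q^{i+1})` -/
noncomputable def P (Q : ℂ) (n : ℕ) : ℂ := ∏ i ∈ range n, (1 - Q ^ (i + 1))

noncomputable def a (Q : ℂ) (i : ℕ) : ℂ := Q ^ (i + 1) / (1 - Q ^ (i + 1)) ^ 2

noncomputable def toTuple (k : ℕ) (s : {s : Finset ℕ // s.card = k}) :
    {m : Fin k → ℕ // StrictMono m ∧ ∀ i, 0 < m i} :=
  ⟨fun i => s.1.orderEmbOfFin s.2 i + 1,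
    fun i j h => by simpa using h, fun i => Nat.succ_pos _⟩

lemma toTuple_bij (k : ℕ) : Function.Bijective (toTuple k) := by
  constructor
  · rintro ⟨s, hs⟩ ⟨t, ht⟩ h
    have h1 : ∀ i, s.orderEmbOfFin hs i = t.orderEmbOfFin ht i := by
      intro i
      have := congrFun (congrArg Subtype.val h) i
      simpa [toTuple] using this
    have h2 := s.range_orderEmbOfFin hs
    have h3 := t.range_orderEmbOfFin ht
    have : (s : Set ℕ) = t := by
      rw [← h2, ← h3]; congr 1; funext i; exact h1 i
    exact Subtype.ext (by exact_mod_cast this)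
  · rintro ⟨m, hm, hpos⟩
    have hmono : StrictMono (fun i => m i - 1) := by
      intro i j h
      have h1 := hm h
      have h2 := hpos i
      show m i - 1 < m j - 1
      omega
    refine ⟨⟨univ.image (fun i => m i - 1), ?_⟩, ?_⟩
    · rw [card_image_of_injective _ hmono.injective]; simp
    · apply Subtype.ext
      funext i
      have := Finset.orderEmbOfFin_unique (s := univ.image (fun i => m i - 1)) (k := k)
        (by rw [card_image_of_injective _ hmono.injective]; simp)
        (f := fun i => m i - 1) (by intro x; simp) hmono
      have h3 := congrFun this i
      have h2 := hpos i
      simp only [toTuple]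
      rw [← h3]
      omega

lemma macA_eq (k : ℕ) (Q : ℂ) :
    macA k Q = ∑' s : {s : Finset ℕ // s.card = k}, ∏ i ∈ s.1, a Q i := by
  unfold macA
  rw [← (Equiv.ofBijective _ (toTuple_bij k)).tsum_eq]
  apply tsum_congr
  rintro ⟨s, hs⟩
  have h : ∏ i ∈ s, a Q i = ∏ i : Fin k, a Q (s.orderEmbOfFin hs i) := by
    conv_lhs => rw [← s.map_orderEmbOfFin_univ hs]
    rw [prod_map]; rfl
  simp only [Equiv.ofBijective_apply, toTuple]
  rw [h]
  simp only [a]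
  rw [prod_div_distrib, prod_pow_eq_pow_sum]

lemma norm_pow_succ_lt {Q : ℂ} (hQ : ‖Q‖ < 1) (i : ℕ) : ‖Q ^ (i + 1)‖ < 1 := by
  rw [norm_pow]; exact pow_lt_one₀ (norm_nonneg _) hQ (by omega)

lemma one_sub_ne {Q : ℂ} (hQ : ‖Q‖ < 1) (i : ℕ) : 1 - Q ^ (i + 1) ≠ 0 := by
  intro h
  have := norm_pow_succ_lt hQ i
  rw [← sub_eq_zero.1 h] at this
  simp at this

lemma P_ne {Q : ℂ} (hQ : ‖Q‖ < 1) (n : ℕ) : P Q n ≠ 0 :=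
  prod_ne_zero_iff.2 fun i _ => one_sub_ne hQ i

lemma summable_pow {Q : ℂ} (hQ : ‖Q‖ < 1) : Summable (fun i : ℕ => ‖Q ^ (i + 1)‖) := by
  simp only [norm_pow]
  exact (summable_nat_add_iff 1).2 (summable_geometric_of_lt_one (norm_nonneg _) hQ)

lemma summable_a {Q : ℂ} (hQ : ‖Q‖ < 1) : Summable (fun i : ℕ => ‖a Q i‖) := by
  refine Summable.of_nonneg_of_le (fun _ => norm_nonneg _) (fun i => ?_)
    ((summable_pow hQ).mul_right (((1 - ‖Q‖) ^ 2)⁻¹))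
  unfold a
  rw [norm_div, div_eq_mul_inv]
  have hpos : 0 < 1 - ‖Q‖ := by linarith
  refine mul_le_mul_of_nonneg_left (inv_anti₀ (by positivity) ?_) (norm_nonneg _)
  · rw [norm_pow]
    have h1 : 1 - ‖Q‖ ≤ ‖1 - Q ^ (i + 1)‖ := by
      have := norm_sub_norm_le (1 : ℂ) (Q ^ (i + 1))
      rw [norm_one, norm_pow] at this
      have h2 : ‖Q‖ ^ (i + 1) ≤ ‖Q‖ := pow_le_of_le_one (norm_nonneg _) hQ.le (by omega)
      linarith
    have : 0 ≤ 1 - ‖Q‖ := by linarith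
    gcongr

lemma hasSum_macA {Q : ℂ} (hQ : ‖Q‖ < 1) (y : ℂ) :
    HasSum (fun k => macA k Q * y ^ k) (∏' i, (1 + a Q i * y)) := by
  have hs : Summable (fun i => ‖a Q i * y‖) := by
    simp only [norm_mul]; exact (summable_a hQ).mul_right _
  have hS := summable_finsetProd_of_summable_norm hs
  rw [tprod_one_add hS]
  have h1 := (Equiv.sigmaFiberEquiv (Finset.card : Finset ℕ → ℕ)).hasSum_iff.2 hS.hasSum
  have h2 := h1.summable.hasSum.sigma (fun k => (h1.summable.sigma_factor k).hasSum)
  rw [h1.tsum_eq] at h2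
  refine h2.congr_fun fun k => ?_
  rw [macA_eq, ← tsum_mul_right]
  apply tsum_congr
  rintro ⟨s, hs⟩
  simp [prod_mul_distrib, hs]

lemma tendsto_P {Q : ℂ} (hQ : ‖Q‖ < 1) :
    Tendsto (P Q) atTop (𝓝 (∏' i : ℕ, (1 - Q ^ (i + 1)))) ∧ ∏' i : ℕ, (1 - Q ^ (i + 1)) ≠ 0 := by
  have hs : Summable (fun i : ℕ => ‖-Q ^ (i + 1)‖) := by simpa using summable_pow hQ
  constructor
  · have := (multipliable_one_add_of_summable hs).tendsto_prod_tprod_nat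
    simp only [← sub_eq_add_neg] at this
    exact this
  · have := tprod_one_add_ne_zero_of_summable (f := fun i : ℕ => -Q ^ (i + 1))
      (fun i => by simpa only [← sub_eq_add_neg] using one_sub_ne hQ i) hs
    simpa only [← sub_eq_add_neg] using this

lemma P_bound {Q : ℂ} (hQ : ‖Q‖ < 1) : ∃ C, 0 ≤ C ∧ ∀ n, ‖P Q n‖ ≤ C ∧ ‖(P Q n)⁻¹‖ ≤ C := by
  obtain ⟨h1, h2⟩ := tendsto_P hQ
  obtain ⟨A, hA⟩ := h1.norm.bddAbove_range
  obtain ⟨B, hB⟩ := (h1.inv₀ h2).norm.bddAbove_range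
  refine ⟨max (max A B) 0, le_max_right _ _, fun n => ⟨?_, ?_⟩⟩
  · exact (hA ⟨n, rfl⟩).trans ((le_max_left _ _).trans (le_max_left _ _))
  · exact (hB ⟨n, rfl⟩).trans ((le_max_right _ _).trans (le_max_left _ _))

/-- finite coefficients -/
noncomputable def d (q : ℂ) (N n : ℕ) : ℂ :=
  if n ≤ N then P (q ^ 2) (2 * N + 1) * (P (q ^ 2) (N - n))⁻¹ * (P (q ^ 2) (N + n + 1))⁻¹
    * q ^ (n ^ 2 + n) else 0

lemma d_of_add (q : ℂ) (n j : ℕ) : d q (n + j) n =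
    P (q ^ 2) (2 * (n + j) + 1) * (P (q ^ 2) j)⁻¹ * (P (q ^ 2) (n + j + n + 1))⁻¹
    * q ^ (n ^ 2 + n) := by
  simp [d]

lemma d_of_gt (q : ℂ) (N n : ℕ) (h : N < n) : d q N n = 0 := by
  simp [d, h]

lemma P_succ (Q : ℂ) (n : ℕ) : P Q (n + 1) = P Q n * (1 - Q ^ (n + 1)) := by
  simp [P, prod_range_succ]

lemma d_rec {q : ℂ} (hq : ‖q ^ 2‖ < 1) (N n : ℕ) (hn : n ≤ N + 1) :
    d q (N + 1) n = (1 + (q ^ 2) ^ (2 * N + 2)) * d q N n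
      + (q ^ 2) ^ (N + 1) * (d q N (n - 1) + d q N (n + 1)) := by
  have hP := P_ne hq
  have h1 := one_sub_ne hq
  rcases n with _ | n
  · rcases N with _ | N
    · rw [d_of_gt q 0 (0 + 1) (by omega)]
      simp [d, P, prod_range_succ]
      have := h1 0
      have h2 := h1 1
      simp at this h2
      rw [← pow_mul] at h2
      norm_num at h2
      ring_nf
      field_simp
      ring
    · have e1 := d_of_add q 0 (N + 1 + 1)
      have e2 := d_of_add q 0 (N + 1)
      have e3 := d_of_add q 1 N
      rw [show 0 + (N + 1 + 1) = N + 1 + 1 by omega] at e1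
      rw [show 0 + (N + 1) = N + 1 by omega] at e2
      rw [show 1 + N = N + 1 by omega] at e3
      simp only [Nat.zero_sub, Nat.zero_add]
      rw [e1, e2, e3]
      rw [show 2 * (N + 1 + 1) + 1 = 2 * N + 3 + 1 + 1 by omega, show 2 * (N + 1) + 1 = 2 * N + 3 by omega,
        show N + 1 + 1 + 0 + 1 = N + 1 + 1 + 1 by omega, show N + 1 + 0 + 1 = N + 1 + 1 by omega]
      simp only [P_succ _ (2 * N + 3 + 1), P_succ _ (2 * N + 3), P_succ _ (N + 1 + 1), P_succ _ (N + 1), P_succ _ N]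
      have := hP N
      have := h1 N
      have := h1 (N + 1)
      have := h1 (N + 1 + 1)
      generalize P (q ^ 2) N = p at *
      generalize P (q ^ 2) (2 * N + 3) = p' at *
      field_simp
      ring
  · obtain ⟨j, rfl⟩ : ∃ j, N = n + j := ⟨N - n, by omega⟩
    simp only [Nat.add_sub_cancel]
    rcases j with _ | _ | j
    · rw [d_of_gt q (n + 0) (n + 1) (by omega), d_of_gt q (n + 0) (n + 1 + 1) (by omega)]
      have e1 := d_of_add q (n + 1) 0
      have e2 := d_of_add q n 0
      simp only [Nat.add_zero] at e1 e2 ⊢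
      rw [e1, e2]
      rw [show n + 1 + (n + 1) + 1 = 2 * (n + 1) + 1 by omega, show n + n + 1 = 2 * n + 1 by omega,
        mul_right_comm _ _ (P (q ^ 2) (2 * (n + 1) + 1))⁻¹, mul_inv_cancel₀ (hP _),
        mul_right_comm _ _ (P (q ^ 2) (2 * n + 1))⁻¹, mul_inv_cancel₀ (hP _)]
      simp [P]
      ring
    · rw [d_of_gt q (n + (0 + 1)) (n + 1 + 1) (by omega)]
      have e1 := d_of_add q (n + 1) 1
      have e2 := d_of_add q n 1
      have e3 := d_of_add q (n + 1) 0
      simp only [Nat.add_zero, Nat.zero_add] at e1 e2 e3 ⊢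
      rw [e1, e2, e3]
      rw [show 2 * (n + 1 + 1) + 1 = 2 * n + 1 + 1 + 1 + 1 + 1 by omega, show 2 * (n + 1) + 1 = 2 * n + 1 + 1 + 1 by omega,
        show n + 1 + 1 + (n + 1) + 1 = 2 * n + 1 + 1 + 1 + 1 by omega, show n + 1 + n + 1 = 2 * n + 1 + 1 by omega,
        show n + 1 + (n + 1) + 1 = 2 * n + 1 + 1 + 1 by omega]
      simp only [P_succ _ (2 * n + 1 + 1 + 1 + 1), P_succ _ (2 * n + 1 + 1 + 1), P_succ _ (2 * n + 1 + 1), P_succ _ 0]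
      have := hP (2 * n + 1 + 1)
      have := h1 0
      have := h1 (2 * n + 1 + 1)
      have := h1 (2 * n + 1 + 1 + 1)
      have h0 : P (q ^ 2) 0 = 1 := by simp [P]
      rw [h0]
      generalize P (q ^ 2) (2 * n + 1 + 1) = p at *
      field_simp
      ring
    · have e1 := d_of_add q (n + 1) (j + 1 + 1)
      have e2 := d_of_add q n (j + 1 + 1)
      have e3 := d_of_add q (n + 1) (j + 1)
      have e4 := d_of_add q (n + 1 + 1) j
      rw [show n + 1 + (j + 1 + 1) = n + (j + 1 + 1) + 1 by omega] at e1
      rw [show n + 1 + (j + 1) = n + (j + 1 + 1) by omega] at e3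
      rw [show n + 1 + 1 + j = n + (j + 1 + 1) by omega] at e4
      rw [e1, e2, e3, e4]
      rw [show 2 * (n + (j + 1 + 1) + 1) + 1 = 2 * (n + (j + 1 + 1)) + 1 + 1 + 1 by omega]
      generalize hM : 2 * (n + (j + 1 + 1)) + 1 = M
      rw [show n + (j + 1 + 1) + 1 + (n + 1) + 1 = 2 * n + j + 3 + 1 + 1 by omega,
       show n + (j + 1 + 1) + n + 1 = 2 * n + j + 3 by omega,
       show n + (j + 1 + 1) + (n + 1) + 1 = 2 * n + j + 3 + 1 by omega,
       show n + (j + 1 + 1) + (n + 1 + 1) + 1 = 2 * n + j + 3 + 1 + 1 by omega]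
      simp only [P_succ _ (M + 1), P_succ _ M, P_succ _ (2 * n + j + 3 + 1), P_succ _ (2 * n + j + 3), P_succ _ (j + 1), P_succ _ j]
      have := hP (2 * n + j + 3)
      have := hP j
      have := h1 j
      have := h1 (j + 1)
      have := h1 (2 * n + j + 3)
      have := h1 (2 * n + j + 3 + 1)
      generalize P (q ^ 2) (2 * n + j + 3) = p at *
      generalize P (q ^ 2) j = p1 at *
      generalize P (q ^ 2) M = p2 at *
      subst hM
      field_simp
      ring

lemma abel (d t : ℕ → ℂ) (M : ℕ) :
    ∑ n ∈ range M, d n * (t (n + 1) + t (n - 1)) + d M * t (M - 1) =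
    ∑ n ∈ range M, (d (n - 1) + d (n + 1)) * t n + d (M - 1) * t M := by
  induction M with
  | zero => simp
  | succ M ih =>
    rw [sum_range_succ, sum_range_succ]
    simp only [Nat.add_sub_cancel]
    linear_combination ih

noncomputable def t (x : ℂ) (n : ℕ) : ℂ :=
  2 * (Polynomial.Chebyshev.T ℂ (2 * (n : ℤ) + 1)).eval (x / 2)

lemma t_rec (x : ℂ) (n : ℕ) : t x (n + 1) + t x (n - 1) = (x ^ 2 - 2) * t x n := by
  have key : ∀ m : ℤ, (Polynomial.Chebyshev.T ℂ (m + 2)).eval (x / 2) +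
      (Polynomial.Chebyshev.T ℂ (m - 2)).eval (x / 2) =
      (x ^ 2 - 2) * (Polynomial.Chebyshev.T ℂ m).eval (x / 2) := by
    intro m
    have h1 := congrArg (Polynomial.eval (x / 2)) (Polynomial.Chebyshev.T_add_two ℂ m)
    have h2 := congrArg (Polynomial.eval (x / 2)) (Polynomial.Chebyshev.T_sub_two ℂ m)
    have h3 := congrArg (Polynomial.eval (x / 2)) (Polynomial.Chebyshev.T_add_one ℂ m)
    simp only [Polynomial.eval_sub, Polynomial.eval_mul, Polynomial.eval_ofNat,
      Polynomial.eval_X] at h1 h2 h3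
    linear_combination h1 + h2 + x * h3
  have hk := key (2 * (n : ℤ) + 1)
  unfold t
  rw [show (2 * ((n + 1 : ℕ) : ℤ) + 1) = 2 * (n : ℤ) + 1 + 2 by push_cast; ring]
  have : Polynomial.Chebyshev.T ℂ (2 * ((n - 1 : ℕ) : ℤ) + 1) =
      Polynomial.Chebyshev.T ℂ (2 * (n : ℤ) + 1 - 2) := by
    rcases n with _ | n
    · norm_num
    · congr 1; push_cast [Nat.add_sub_cancel]; ring
  rw [this]
  linear_combination 2 * hk

lemma finite_id {q : ℂ} (hq : ‖q ^ 2‖ < 1) (x : ℂ) (N : ℕ) :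
    ∑ n ∈ range (N + 1), d q N n * t x n =
      x * ∏ m ∈ range N, ((1 - (q ^ 2) ^ (m + 1)) ^ 2 + x ^ 2 * (q ^ 2) ^ (m + 1)) := by
  induction N with
  | zero =>
    have h := one_sub_ne hq 0
    simp at h
    simp [d, P, t, h]
    field_simp
  | succ N ih =>
    rw [prod_range_succ, ← mul_assoc, ← ih]
    have h1 : ∑ n ∈ range (N + 1), d q N n * t x n = ∑ n ∈ range (N + 1 + 1), d q N n * t x n := by
      rw [sum_range_succ _ (N + 1), d_of_gt q N (N + 1) (by omega)]; simp
    have h2 := abel (d q N) (t x) (N + 1 + 1)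
    rw [d_of_gt q N (N + 1 + 1) (by omega), Nat.add_sub_cancel,
      d_of_gt q N (N + 1) (by omega)] at h2
    simp only [t_rec, zero_mul, add_zero] at h2
    have h3 : ∑ n ∈ range (N + 1 + 1), d q N n * ((x ^ 2 - 2) * t x n) =
        (x ^ 2 - 2) * ∑ n ∈ range (N + 1 + 1), d q N n * t x n := by
      rw [mul_sum]; apply sum_congr rfl; intros; ring
    rw [h3] at h2
    rw [h1]
    have h4 : ∑ n ∈ range (N + 1 + 1), d q (N + 1) n * t x n =
        (1 + (q ^ 2) ^ (2 * N + 2)) * ∑ n ∈ range (N + 1 + 1), d q N n * t x n +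
        (q ^ 2) ^ (N + 1) * ∑ n ∈ range (N + 1 + 1), (d q N (n - 1) + d q N (n + 1)) * t x n := by
      rw [mul_sum, mul_sum, ← sum_add_distrib]
      apply sum_congr rfl
      intro n hn
      rw [d_rec hq N n (by have := mem_range.1 hn; omega)]
      ring
    rw [h4, ← h2]
    ring

lemma T_bound (x : ℂ) (n : ℕ) :
    ‖(Polynomial.Chebyshev.T ℂ (n : ℤ)).eval (x / 2)‖ ≤ (‖x‖ + 1) ^ n ∧
    ‖(Polynomial.Chebyshev.T ℂ ((n : ℤ) + 1)).eval (x / 2)‖ ≤ (‖x‖ + 1) ^ (n + 1) := by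
  induction n with
  | zero =>
    simp
    have := norm_nonneg x
    linarith
  | succ n ih =>
    obtain ⟨h1, h2⟩ := ih
    refine ⟨by exact_mod_cast h2, ?_⟩
    have h := congrArg (Polynomial.eval (x / 2)) (Polynomial.Chebyshev.T_add_two ℂ (n : ℤ))
    push_cast
    rw [add_assoc, one_add_one_eq_two, h]
    simp only [Polynomial.eval_sub, Polynomial.eval_mul, Polynomial.eval_ofNat, Polynomial.eval_X]
    rw [mul_div_cancel₀ x two_ne_zero]
    have hx := norm_nonneg x
    calc _ ≤ ‖x‖ * (‖x‖ + 1) ^ (n + 1) + (‖x‖ + 1) ^ n := by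
          refine (norm_sub_le _ _).trans ?_
          rw [norm_mul]
          gcongr
      _ ≤ (‖x‖ + 1) ^ (n + 1 + 1) := by
          have : 0 ≤ ‖x‖ * (‖x‖ + 1) ^ n := by positivity
          ring_nf at this ⊢
          linarith

lemma summable_main {q : ℂ} (hq : ‖q‖ < 1) (x : ℂ) :
    Summable (fun n : ℕ => ‖t x n * q ^ (n ^ 2 + n)‖) := by
  have hx := norm_nonneg x
  have hr := norm_nonneg q
  have hb : Summable (fun n : ℕ => 2 * ((‖x‖ + 1) ^ (2 * n + 1) * ‖q‖ ^ (n ^ 2 + n))) := by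
    apply Summable.mul_left
    apply summable_of_ratio_norm_eventually_le (r := 1 / 2) (by norm_num)
    have hT : Tendsto (fun n : ℕ => (‖x‖ + 1) ^ 2 * ‖q‖ ^ n) atTop (𝓝 ((‖x‖ + 1) ^ 2 * 0)) :=
      (tendsto_pow_atTop_nhds_zero_of_lt_one hr hq).const_mul _
    rw [mul_zero] at hT
    filter_upwards [hT.eventually (gt_mem_nhds (show (0 : ℝ) < 1 / 2 by norm_num))] with n hn
    rw [Real.norm_of_nonneg (by positivity), Real.norm_of_nonneg (by positivity)]
    have hle : ‖q‖ ^ (2 * n + 2) ≤ ‖q‖ ^ n := pow_le_pow_of_le_one hr hq.le (by omega)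
    calc (‖x‖ + 1) ^ (2 * (n + 1) + 1) * ‖q‖ ^ ((n + 1) ^ 2 + (n + 1))
        = ((‖x‖ + 1) ^ 2 * ‖q‖ ^ (2 * n + 2)) * ((‖x‖ + 1) ^ (2 * n + 1) * ‖q‖ ^ (n ^ 2 + n)) := by ring
      _ ≤ ((‖x‖ + 1) ^ 2 * ‖q‖ ^ n) * ((‖x‖ + 1) ^ (2 * n + 1) * ‖q‖ ^ (n ^ 2 + n)) := by gcongr
      _ ≤ _ := by gcongr
  refine Summable.of_nonneg_of_le (fun _ => norm_nonneg _) (fun n => ?_) hb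
  unfold t
  rw [norm_mul, norm_mul, norm_pow, mul_assoc]
  have := (T_bound x (2 * n)).2
  push_cast at this
  simp only [Complex.norm_ofNat]
  gcongr

lemma main {q : ℂ} (hq : ‖q‖ < 1) (x : ℂ) :
    ∑' n : ℕ, t x n * q ^ (n ^ 2 + n) = (∏' i : ℕ, (1 - (q ^ 2) ^ (i + 1))) ^ 3 *
      (x * ∏' i, (1 + a (q ^ 2) i * x ^ 2)) := by
  have hQ : ‖q ^ 2‖ < 1 := by
    rw [norm_pow]; exact pow_lt_one₀ (norm_nonneg _) hq (by norm_num)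
  obtain ⟨hP, hP0⟩ := tendsto_P hQ
  obtain ⟨C, hC0, hC⟩ := P_bound hQ
  set L := ∏' i : ℕ, (1 - (q ^ 2) ^ (i + 1))
  have lim1 : Tendsto (fun N => ∑' n, d q N n * t x n) atTop
      (𝓝 (∑' n, L⁻¹ * (t x n * q ^ (n ^ 2 + n)))) := by
    apply tendsto_tsum_of_dominated_convergence
      (bound := fun n => C * C * C * ‖t x n * q ^ (n ^ 2 + n)‖)
    · exact (summable_main hq x).mul_left _
    · intro n
      have h1 : Tendsto (fun N => P (q ^ 2) (2 * N + 1)) atTop (𝓝 L) :=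
        hP.comp (tendsto_atTop_mono (fun N => by simp only [id]; omega) tendsto_id)
      have h2 : Tendsto (fun N => P (q ^ 2) (N - n)) atTop (𝓝 L) :=
        hP.comp (tendsto_sub_atTop_nat n)
      have h3 : Tendsto (fun N => P (q ^ 2) (N + n + 1)) atTop (𝓝 L) :=
        hP.comp (tendsto_atTop_mono (fun N => by simp only [id]; omega) tendsto_id)
      have h4 := (((h1.mul (h2.inv₀ hP0)).mul (h3.inv₀ hP0)).mul_const (q ^ (n ^ 2 + n))).mul_const (t x n)
      have e : L * L⁻¹ * L⁻¹ * q ^ (n ^ 2 + n) * t x n = L⁻¹ * (t x n * q ^ (n ^ 2 + n)) := by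
        field_simp
      rw [e] at h4
      refine h4.congr' ?_
      filter_upwards [eventually_ge_atTop n] with N hN
      simp [d, hN]
    · refine Eventually.of_forall fun N n => ?_
      unfold d
      split_ifs
      · calc _ = ‖P (q ^ 2) (2 * N + 1)‖ * ‖(P (q ^ 2) (N - n))⁻¹‖ * ‖(P (q ^ 2) (N + n + 1))⁻¹‖ *
            ‖t x n * q ^ (n ^ 2 + n)‖ := by simp only [norm_mul]; ring
          _ ≤ _ := by
            gcongr
            · exact (hC _).1
            · exact (hC _).2
            · exact (hC _).2
      · rw [zero_mul, norm_zero]; positivity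
  have lim2 : Tendsto (fun N => ∑' n, d q N n * t x n) atTop
      (𝓝 (x * (L ^ 2 * ∏' i, (1 + a (q ^ 2) i * x ^ 2)))) := by
    have hs : Summable (fun i => ‖a (q ^ 2) i * x ^ 2‖) := by
      simp only [norm_mul]; exact (summable_a hQ).mul_right _
    have hm := (multipliable_one_add_of_summable hs).tendsto_prod_tprod_nat
    refine (((hP.pow 2).mul hm).const_mul x).congr fun N => ?_
    rw [tsum_eq_sum (s := range (N + 1)), finite_id hQ]
    · congr 1
      rw [P, ← prod_pow, ← prod_mul_distrib]
      apply prod_congr rfl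
      intro i _
      have := one_sub_ne hQ i
      unfold a
      field_simp
    · intro n hn
      rw [d_of_gt q N n (by simpa using hn), zero_mul]
  have := tendsto_nhds_unique lim1 lim2
  rw [tsum_mul_left] at this
  have h3 := congrArg (fun w => L * w) this
  simp only [← mul_assoc, mul_inv_cancel₀ hP0, one_mul] at h3
  rw [h3]
  ring

end Mac

theorem stmt0 (q x : ℂ) (hq : ‖q‖ < 1) :
    Summable (fun n : ℕ =>
      (Polynomial.Chebyshev.T ℂ (2 * (n : ℤ) + 1)).eval (x / 2) * q ^ (n ^ 2 + n)) ∧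
    Summable (fun k : ℕ => macA k (q ^ 2) * x ^ (2 * k + 1)) ∧
    2 * ∑' n : ℕ, (Polynomial.Chebyshev.T ℂ (2 * (n : ℤ) + 1)).eval (x / 2) * q ^ (n ^ 2 + n) =
      (∏' m : ℕ, (1 - q ^ (2 * (m + 1)))) ^ 3 *
        ∑' k : ℕ, macA k (q ^ 2) * x ^ (2 * k + 1) := by
  have hQ : ‖q ^ 2‖ < 1 := by
    rw [norm_pow]; exact pow_lt_one₀ (norm_nonneg _) hq (by norm_num)
  have h1 : HasSum (fun k : ℕ => macA k (q ^ 2) * x ^ (2 * k + 1)) _ :=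
    ((Mac.hasSum_macA hQ (x ^ 2)).mul_left x).congr_fun fun k => by
      ring
  have h2 := Mac.main hq x
  refine ⟨?_, h1.summable, ?_⟩
  · have := (Mac.summable_main hq x).of_norm.mul_left (1 / 2)
    refine this.congr fun n => ?_
    unfold Mac.t
    ring
  · rw [h1.tsum_eq]
    simp only [pow_mul]
    rw [← h2, ← tsum_mul_left]
    apply tsum_congr
    intro n
    unfold Mac.t
    ring
end

section
/- For every complex number q with |q| < 1 and every complex number x, the identity 1 + 2·∑_{n=1}^∞ T_{2n}(x/2)·q^{n²} = (∏_{m=1}^∞ (1 − q^m)/(1 + q^m)) · ∑_{k=0}^∞ C_k(q)·x^{2k} holds, where both sides converge absolutely. -/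
/-- MacMahon's odd generalized sum-of-divisors function `C_k(q)`, defined as the sum over all
strictly increasing `k`-tuples of positive integers. -/
noncomputable def macC (k : ℕ) (q : ℂ) : ℂ :=
  ∑' m : {m : Fin k → ℕ // StrictMono m ∧ ∀ i, 0 < m i},
    q ^ (∑ i, (2 * m.1 i - 1)) / ∏ i, (1 - q ^ (2 * m.1 i - 1)) ^ 2

open Filter Topology

/-- term of the product -/
noncomputable def macG (q : ℂ) (m : ℕ) : ℂ := q ^ (2 * m + 1) / (1 - q ^ (2 * m + 1)) ^ 2

lemma one_sub_norm_le (q : ℂ) (hq : ‖q‖ < 1) (j : ℕ) : 1 - ‖q‖ ≤ ‖1 - q ^ (j + 1)‖ := by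
  have h1 : ‖q ^ (j + 1)‖ ≤ ‖q‖ := by
    rw [norm_pow]
    exact pow_le_of_le_one (norm_nonneg _) hq.le (by omega)
  have h2 := norm_sub_norm_le (1 : ℂ) (q ^ (j + 1))
  rw [norm_one] at h2
  linarith

lemma one_sub_pow_ne (q : ℂ) (hq : ‖q‖ < 1) (j : ℕ) : 1 - q ^ (j + 1) ≠ 0 := by
  have := one_sub_norm_le q hq j
  rw [← norm_pos_iff]
  linarith

lemma one_add_pow_ne (q : ℂ) (hq : ‖q‖ < 1) (j : ℕ) : 1 + q ^ (j + 1) ≠ 0 := by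
  intro h
  have h1 : q ^ (j + 1) = -1 := by linear_combination h
  have h2 : ‖q‖ ^ (j + 1) = 1 := by rw [← norm_pow, h1]; simp
  have h3 : ‖q‖ ^ (j + 1) < 1 := pow_lt_one₀ (norm_nonneg _) hq (by omega)
  linarith

lemma macG_summable (q : ℂ) (hq : ‖q‖ < 1) : Summable (fun m => ‖macG q m‖) := by
  have h0 : 0 < 1 - ‖q‖ := by linarith
  have hs : Summable (fun m : ℕ => ‖q‖ ^ m * ((1 - ‖q‖) ^ 2)⁻¹) :=
    (summable_geometric_of_lt_one (norm_nonneg _) hq).mul_right _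
  refine Summable.of_nonneg_of_le (fun _ => norm_nonneg _) (fun m => ?_) hs
  rw [macG, norm_div, norm_pow, norm_pow, div_eq_mul_inv]
  have h1 := one_sub_norm_le q hq (2 * m)
  have h2 : ‖q‖ ^ (2 * m + 1) ≤ ‖q‖ ^ m :=
    pow_le_pow_of_le_one (norm_nonneg _) hq.le (by omega)
  gcongr

/-- reindexing -/
def macEquiv (k : ℕ) :
    (Fin k ↪o ℕ) ≃ {m : Fin k → ℕ // StrictMono m ∧ ∀ i, 0 < m i} where
  toFun f := ⟨fun i => f i + 1, fun _ _ h => Nat.succ_lt_succ (f.strictMono h),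
    fun _ => Nat.succ_pos _⟩
  invFun m := OrderEmbedding.ofStrictMono (fun i => m.1 i - 1) (by
    intro i j h
    have h1 := m.2.1 h
    have h2 := m.2.2 i
    show m.1 i - 1 < m.1 j - 1
    omega)
  left_inv f := by ext i; simp
  right_inv m := by
    apply Subtype.ext
    funext i
    have h2 := m.2.2 i
    show m.1 i - 1 + 1 = m.1 i
    omega

lemma macC_eq (k : ℕ) (q : ℂ) :
    macC k q = ∑' s : Set.powersetCard ℕ k, ∏ i ∈ s.1, macG q i := by
  rw [macC, ← (macEquiv k).tsum_eq, ← (Set.powersetCard.ofFinEmbEquiv (I := ℕ)).symm.tsum_eq]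
  refine tsum_congr fun s => ?_
  conv_rhs => rw [← Finset.map_orderEmbOfFin_univ s.1 s.2, Finset.prod_map]
  simp only [macG, Finset.prod_div_distrib, Finset.prod_pow_eq_pow_sum]
  rfl

lemma mac_expand (q x : ℂ) (hq : ‖q‖ < 1) :
    HasSum (fun k : ℕ => macC k q * x ^ (2 * k)) (∏' m, (1 + x ^ 2 * macG q m)) := by
  have hs : Summable (fun m => ‖x ^ 2 * macG q m‖) := by
    simp only [norm_mul]
    exact (macG_summable q hq).mul_left _
  have h1 := summable_finsetProd_of_summable_norm hs
  rw [tprod_one_add h1]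
  have h2 := h1.hasSum
  rw [← (Set.powersetCard.prodEquiv (α := ℕ)).hasSum_iff] at h2
  have h3 := h2.sigma (fun k => (h2.summable.sigma_factor k).hasSum)
  suffices h : (fun k : ℕ => macC k q * x ^ (2 * k)) = _ by rw [h]; exact h3
  funext k
  rw [macC_eq, ← tsum_mul_right]
  refine tsum_congr fun s => ?_
  simp only [Function.comp, Set.powersetCard.prodEquiv_apply, Finset.prod_mul_distrib,
    Finset.prod_const]
  rw [show (s.1).card = k from s.2, mul_comm, pow_mul]

/-- finite q-Pochhammer -/
noncomputable def pochA (Q : ℂ) (n : ℕ) : ℂ := ∏ j ∈ Finset.range n, (1 - Q ^ (j + 1))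

/-- reciprocal of the Pochhammer symbol extended by zero -/
noncomputable def bI (Q : ℂ) (k : ℤ) : ℂ := if k < 0 then 0 else (pochA Q k.toNat)⁻¹

lemma pochA_ne (Q : ℂ) (hQ : ‖Q‖ < 1) (n : ℕ) : pochA Q n ≠ 0 :=
  Finset.prod_ne_zero_iff.mpr fun j _ => one_sub_pow_ne Q hQ j

lemma bI_rec (Q : ℂ) (hQ : ‖Q‖ < 1) (k : ℤ) : bI Q (k - 1) = (1 - Q ^ k) * bI Q k := by
  rcases lt_trichotomy k 0 with h | h | h
  · simp [bI, h, show k - 1 < 0 by omega]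
  · subst h; simp [bI]
  · obtain ⟨n, rfl⟩ : ∃ n : ℕ, k = (n : ℤ) + 1 := ⟨(k - 1).toNat, by omega⟩
    have h1 : ((n : ℤ) + 1).toNat = n + 1 := by omega
    have h2 : ¬ ((n : ℤ) + 1 < 0) := by omega
    have h3 : ¬ ((n : ℤ) < 0) := by omega
    have h4 : Q ^ ((n : ℤ) + 1) = Q ^ (n + 1) := by
      exact_mod_cast zpow_natCast Q (n + 1)
    simp only [bI, add_sub_cancel_right, h2, h3, if_false, h1, Int.toNat_natCast, h4]
    have h5 := one_sub_pow_ne Q hQ n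
    have h6 := pochA_ne Q hQ n
    rw [show pochA Q (n + 1) = pochA Q n * (1 - Q ^ (n + 1)) from Finset.prod_range_succ _ _]
    field_simp

/-- coefficient of the finite triple product -/
noncomputable def cF (q : ℂ) (N : ℕ) (n : ℤ) : ℂ :=
  pochA (q ^ 2) (2 * N) * bI (q ^ 2) (N - n) * bI (q ^ 2) (N + n) * q ^ (n ^ 2)

lemma cF_zero (q : ℂ) (N : ℕ) (n : ℤ) (h : n ∉ Finset.Icc (-(N : ℤ)) N) : cF q N n = 0 := by
  rw [Finset.mem_Icc, not_and_or] at h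
  rcases h with h | h
  · simp [cF, bI, show (N : ℤ) + n < 0 by omega]
  · simp [cF, bI, show (N : ℤ) - n < 0 by omega]

lemma cF_rec (q : ℂ) (h0 : q ≠ 0) (hq : ‖q‖ < 1) (N : ℕ) (n : ℤ) :
    cF q (N + 1) n = (1 + q ^ (4 * N + 2)) * cF q N n
      + q ^ (2 * N + 1) * (cF q N (n - 1) + cF q N (n + 1)) := by
  have hQ : ‖q ^ 2‖ < 1 := by
    rw [norm_pow]; exact pow_lt_one₀ (norm_nonneg _) hq (by omega)
  have hQ0 : q ^ 2 ≠ 0 := pow_ne_zero _ h0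
  set b := bI (q ^ 2) with hb
  have r := bI_rec (q ^ 2) hQ
  rw [← hb] at r
  have e1 : b ((N : ℤ) - n) = (1 - (q ^ 2) ^ ((N : ℤ) + 1 - n)) * b ((N : ℤ) + 1 - n) := by
    rw [← r]; congr 1; ring
  have e2 : b ((N : ℤ) + n) = (1 - (q ^ 2) ^ ((N : ℤ) + 1 + n)) * b ((N : ℤ) + 1 + n) := by
    rw [← r]; congr 1; ring
  have e3 : b ((N : ℤ) + n - 1) = (1 - (q ^ 2) ^ ((N : ℤ) + n)) * b ((N : ℤ) + n) := r _
  have e4 : b ((N : ℤ) - n - 1) = (1 - (q ^ 2) ^ ((N : ℤ) - n)) * b ((N : ℤ) - n) := r _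
  have ep : pochA (q ^ 2) (2 * (N + 1)) = pochA (q ^ 2) (2 * N)
      * (1 - (q ^ 2) ^ (2 * N + 1)) * (1 - (q ^ 2) ^ (2 * N + 2)) := by
    simp only [pochA, show 2 * (N + 1) = 2 * N + 1 + 1 by ring, Finset.prod_range_succ]
  simp only [cF, ← hb]
  rw [ep]
  push_cast
  rw [show (N : ℤ) - (n - 1) = (N : ℤ) + 1 - n by ring,
    show (N : ℤ) + (n + 1) = (N : ℤ) + 1 + n by ring,
    show (N : ℤ) + (n - 1) = (N : ℤ) + n - 1 by ring,
    show (N : ℤ) - (n + 1) = (N : ℤ) - n - 1 by ring, e3, e4, e1, e2]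
  have z1 : q ^ ((n - 1) ^ 2) = q ^ (n ^ 2) * (((q ^ 2) ^ n)⁻¹ * q) := by
    rw [show (n - 1) ^ 2 = n ^ 2 + (-(2 * n) + 1) by ring, zpow_add₀ h0, zpow_add₀ h0, zpow_neg,
      zpow_mul, zpow_one]
    norm_cast
  have z2 : q ^ ((n + 1) ^ 2) = q ^ (n ^ 2) * ((q ^ 2) ^ n * q) := by
    rw [show (n + 1) ^ 2 = n ^ 2 + ((2 * n) + 1) by ring, zpow_add₀ h0, zpow_add₀ h0,
      zpow_mul, zpow_one]
    norm_cast
  rw [z1, z2]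
  simp only [zpow_add₀ hQ0, zpow_sub₀ hQ0, zpow_one, zpow_natCast]
  have p1 : q ^ (4 * N + 2) = ((q ^ 2) ^ N) ^ 2 * q ^ 2 := by ring
  have p2 : q ^ (2 * N + 1) = (q ^ 2) ^ N * q := by ring
  have p3 : (q ^ 2) ^ (2 * N + 1) = ((q ^ 2) ^ N) ^ 2 * q ^ 2 := by ring
  have p4 : (q ^ 2) ^ (2 * N + 2) = ((q ^ 2) ^ N) ^ 2 * (q ^ 2) ^ 2 := by ring
  rw [p1, p2, p3, p4]
  have hv : (q ^ 2) ^ n ≠ 0 := zpow_ne_zero _ hQ0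
  generalize (q ^ 2) ^ n = v at *
  generalize (q ^ 2) ^ N = u at *
  generalize q ^ (n ^ 2) = w at *
  generalize b ((N : ℤ) + 1 - n) = b1 at *
  generalize b ((N : ℤ) + 1 + n) = b2 at *
  generalize pochA (q ^ 2) (2 * N) = a at *
  field_simp
  ring

/-- Chebyshev values -/
noncomputable def tC (x : ℂ) (n : ℤ) : ℂ := (Polynomial.Chebyshev.T ℂ (2 * n)).eval (x / 2)

lemma tC_mul (x : ℂ) (n : ℤ) : (x ^ 2 - 2) * tC x n = tC x (n + 1) + tC x (n - 1) := by
  have h := congrArg (Polynomial.eval (x / 2)) (Polynomial.Chebyshev.T_mul_T ℂ (2 * n) 2)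
  simp only [Polynomial.eval_mul, Polynomial.eval_add, Polynomial.Chebyshev.T_two,
    Polynomial.eval_sub, Polynomial.eval_pow, Polynomial.eval_X, Polynomial.eval_one,
    Polynomial.eval_ofNat] at h
  simp only [tC, mul_add, mul_sub, mul_one]
  rw [← h]
  ring

lemma tC_neg (x : ℂ) (n : ℤ) : tC x (-n) = tC x n := by
  simp [tC, mul_neg]

lemma T_bound (y : ℂ) (n : ℕ) :
    ‖(Polynomial.Chebyshev.T ℂ n).eval y‖ ≤ (2 * ‖y‖ + 1) ^ n := by
  induction n using Nat.twoStepInduction with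
  | zero => simp
  | one => simp; linarith [norm_nonneg y]
  | more n h1 h2 =>
    push_cast at *
    rw [Polynomial.Chebyshev.T_add_two]
    simp only [Polynomial.eval_sub, Polynomial.eval_mul, Polynomial.eval_ofNat, Polynomial.eval_X]
    have h3 : (2 * ‖y‖ + 1) ^ n ≤ (2 * ‖y‖ + 1) ^ (n + 1) :=
      pow_le_pow_right₀ (by linarith [norm_nonneg y]) (by omega)
    refine (norm_sub_le _ _).trans ?_
    rw [norm_mul, norm_mul, Complex.norm_ofNat]
    calc _ ≤ 2 * ‖y‖ * (2 * ‖y‖ + 1) ^ (n + 1) + (2 * ‖y‖ + 1) ^ (n + 1) := by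
            gcongr; exact h1.trans h3
      _ = _ := by ring

lemma hasSum_aux {f g : ℤ → ℂ} {a b : ℂ} (h1 : f = g) (h2 : a = b) (h : HasSum g b) :
    HasSum f a := by
  rw [h1, h2]; exact h

lemma finite_triple (q x : ℂ) (h0 : q ≠ 0) (hq : ‖q‖ < 1) (N : ℕ) :
    HasSum (fun n : ℤ => cF q N n * tC x n)
      (∏ m ∈ Finset.range N, (1 + q ^ (4 * m + 2) + q ^ (2 * m + 1) * (x ^ 2 - 2))) := by
  induction N with
  | zero =>
    have := hasSum_sum_of_ne_finset_zero (L := SummationFilter.unconditional ℤ) (f := fun n : ℤ => cF q 0 n * tC x n)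
      (s := Finset.Icc (-((0 : ℕ) : ℤ)) (0 : ℕ)) (fun n hn => by rw [cF_zero q 0 n hn, zero_mul])
    simpa [cF, bI, pochA, tC] using this
  | succ N ih =>
    rw [Finset.prod_range_succ]
    have hs : Summable (fun n : ℤ => cF q N n * tC x (n + 1)) :=
      summable_of_ne_finset_zero (s := Finset.Icc (-(N : ℤ)) N)
        (fun n hn => by rw [cF_zero q N n hn, zero_mul])
    have hs2 : Summable (fun n : ℤ => cF q N n * tC x (n - 1)) :=
      summable_of_ne_finset_zero (s := Finset.Icc (-(N : ℤ)) N)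
        (fun n hn => by rw [cF_zero q N n hn, zero_mul])
    have k1 := hs.hasSum
    have k2 := hs2.hasSum
    have k3 : HasSum (fun n : ℤ => cF q N n * tC x (n + 1) + cF q N n * tC x (n - 1))
        ((x ^ 2 - 2) * ∏ m ∈ Finset.range N,
          (1 + q ^ (4 * m + 2) + q ^ (2 * m + 1) * (x ^ 2 - 2))) := by
      have h := ih.mul_left (x ^ 2 - 2)
      suffices h' : (fun n : ℤ => cF q N n * tC x (n + 1) + cF q N n * tC x (n - 1)) = _ by
        rw [h']; exact h
      funext n
      linear_combination -cF q N n * tC_mul x n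
    have k4 := (k1.add k2).unique k3
    rw [← (Equiv.subRight (1 : ℤ)).hasSum_iff] at k1
    rw [← (Equiv.addRight (1 : ℤ)).hasSum_iff] at k2
    have k5 := (ih.mul_left (1 + q ^ (4 * N + 2))).add ((k1.add k2).mul_left (q ^ (2 * N + 1)))
    rw [k4] at k5
    refine hasSum_aux ?_ ?_ k5
    · funext n
      simp only [cF_rec q h0 hq, Function.comp, Equiv.subRight_apply, Equiv.coe_addRight,
        sub_add_cancel, add_sub_cancel_right]
      ring
    · ring

lemma pow_norm_summable (q : ℂ) (hq : ‖q‖ < 1) : Summable (fun m : ℕ => ‖q ^ (m + 1)‖) := by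
  simp only [norm_pow]
  exact (summable_nat_add_iff 1).mpr (summable_geometric_of_lt_one (norm_nonneg _) hq)

lemma pochA_tendsto (Q : ℂ) (hQ : ‖Q‖ < 1) : ∃ L ≠ 0, Tendsto (pochA Q) atTop (𝓝 L) := by
  have hs : Summable (fun m : ℕ => ‖-Q ^ (m + 1)‖) := by
    simp only [norm_neg]; exact pow_norm_summable Q hQ
  refine ⟨∏' m : ℕ, (1 + -Q ^ (m + 1)), tprod_one_add_ne_zero_of_summable (fun i => ?_) hs, ?_⟩
  · have := one_sub_pow_ne Q hQ i
    rwa [← sub_eq_add_neg]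
  · have := (multipliable_one_add_of_summable hs).hasProd.tendsto_prod_nat
    simp only [← sub_eq_add_neg] at this ⊢
    exact this

lemma plus_tendsto (Q : ℂ) (hQ : ‖Q‖ < 1) : ∃ L ≠ 0,
    Tendsto (fun n => ∏ j ∈ Finset.range n, (1 + Q ^ (j + 1))) atTop (𝓝 L) := by
  have hs := pow_norm_summable Q hQ
  exact ⟨_, tprod_one_add_ne_zero_of_summable (fun i => one_add_pow_ne Q hQ i) hs,
    (multipliable_one_add_of_summable hs).hasProd.tendsto_prod_nat⟩

lemma ratio_tendsto (q : ℂ) (hq : ‖q‖ < 1) :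
    Tendsto (fun n => ∏ m ∈ Finset.range n, (1 - q ^ (m + 1)) / (1 + q ^ (m + 1))) atTop
      (𝓝 (∏' m : ℕ, (1 - q ^ (m + 1)) / (1 + q ^ (m + 1)))) := by
  have h0 : 0 < 1 - ‖q‖ := by linarith
  have hs : Summable (fun m : ℕ => ‖-2 * q ^ (m + 1) / (1 + q ^ (m + 1))‖) := by
    refine Summable.of_nonneg_of_le (fun _ => norm_nonneg _) (fun m => ?_)
      (((pow_norm_summable q hq).mul_left 2).mul_right ((1 - ‖q‖)⁻¹))
    have h1 : 1 - ‖q‖ ≤ ‖1 + q ^ (m + 1)‖ := by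
      have h1 : ‖q ^ (m + 1)‖ ≤ ‖q‖ := by
        rw [norm_pow]
        exact pow_le_of_le_one (norm_nonneg _) hq.le (by omega)
      have h2 := norm_sub_norm_le (1 : ℂ) (-q ^ (m + 1))
      rw [norm_one, norm_neg, sub_neg_eq_add] at h2
      linarith
    rw [norm_div, norm_mul, norm_neg, Complex.norm_ofNat, div_eq_mul_inv]
    gcongr
  have := (multipliable_one_add_of_summable hs).hasProd.tendsto_prod_nat
  have e : (fun m : ℕ => 1 + -2 * q ^ (m + 1) / (1 + q ^ (m + 1)))
      = fun m : ℕ => (1 - q ^ (m + 1)) / (1 + q ^ (m + 1)) := by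
    funext m
    have := one_add_pow_ne q hq m
    field_simp
    ring
  rw [e] at this
  exact this

lemma bI_tendsto (Q L : ℂ) (hL : L ≠ 0) (h : Tendsto (pochA Q) atTop (𝓝 L)) :
    Tendsto (bI Q) atTop (𝓝 L⁻¹) := by
  have h1 : Tendsto Int.toNat atTop atTop :=
    tendsto_atTop_atTop.mpr fun b => ⟨b, fun a ha => by omega⟩
  refine ((h.comp h1).inv₀ hL).congr' ?_
  filter_upwards [eventually_ge_atTop 0] with k hk
  simp [bI, not_lt.mpr hk]

lemma bI_bound (Q L : ℂ) (hL : L ≠ 0) (h : Tendsto (pochA Q) atTop (𝓝 L)) :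
    ∃ K, 0 ≤ K ∧ ∀ k, ‖bI Q k‖ ≤ K := by
  obtain ⟨K, hK⟩ := (Metric.isBounded_range_of_tendsto _ (h.inv₀ hL)).exists_norm_le
  have hK0 : 0 ≤ K := (norm_nonneg _).trans (hK _ ⟨0, rfl⟩)
  refine ⟨K, hK0, fun k => ?_⟩
  rw [bI]
  split_ifs
  · simpa using hK0
  · exact hK _ ⟨_, rfl⟩

/-- theta term -/
noncomputable def uT (q x : ℂ) (n : ℤ) : ℂ := q ^ (n ^ 2) * tC x n

lemma uT_neg (q x : ℂ) (n : ℤ) : uT q x (-n) = uT q x n := by simp [uT, tC_neg]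

lemma uT_nat (q x : ℂ) (n : ℕ) : uT q x n = q ^ (n ^ 2) * tC x n := by
  rw [uT]; congr 1

lemma uT_summable_nat (q x : ℂ) (hq : ‖q‖ < 1) : Summable (fun n : ℕ => ‖uT q x n‖) := by
  set R := ‖x‖ + 1 with hR
  have hR0 : 0 ≤ R := by positivity
  have ht : Tendsto (fun n : ℕ => R ^ 2 * ‖q‖ ^ n) atTop (𝓝 0) := by
    simpa using (tendsto_pow_atTop_nhds_zero_of_lt_one (norm_nonneg q) hq).const_mul (R ^ 2)
  have he := ht.eventually_lt_const (show (0 : ℝ) < 1 / 2 by norm_num)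
  refine Summable.of_norm_bounded_eventually_nat
    (summable_geometric_of_lt_one (r := 1 / 2) (by norm_num) (by norm_num)) ?_
  filter_upwards [he] with n hn
  rw [norm_norm, uT_nat, norm_mul, norm_pow]
  have h1 : ‖tC x n‖ ≤ R ^ (2 * n) := by
    have h := T_bound (x / 2) (2 * n)
    rw [norm_div, Complex.norm_ofNat, show 2 * (‖x‖ / 2) + 1 = R by rw [hR]; ring] at h
    push_cast at h
    exact h
  calc ‖q‖ ^ n ^ 2 * ‖tC x n‖ ≤ ‖q‖ ^ n ^ 2 * R ^ (2 * n) := by gcongr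
    _ = (R ^ 2 * ‖q‖ ^ n) ^ n := by rw [mul_pow, ← pow_mul, ← pow_mul, sq n]; ring
    _ ≤ (1 / 2) ^ n := by gcongr

lemma uT_summable (q x : ℂ) (hq : ‖q‖ < 1) : Summable (fun n : ℤ => ‖uT q x n‖) := by
  refine Summable.of_nat_of_neg (uT_summable_nat q x hq) ?_
  simp only [uT_neg]
  exact uT_summable_nat q x hq

lemma uT_tsum (q x : ℂ) (hq : ‖q‖ < 1) :
    ∑' n : ℤ, uT q x n = 1 + 2 * ∑' n : ℕ, uT q x ((n : ℤ) + 1) := by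
  have h := (uT_summable_nat q x hq).of_norm
  have h1 : Summable (fun n : ℕ => uT q x ((n : ℤ) + 1)) := by
    have := (summable_nat_add_iff 1).mpr h
    exact_mod_cast this
  have h2 : Summable (fun n : ℕ => uT q x (-((n : ℤ) + 1))) := by
    simp only [uT_neg]; exact h1
  rw [tsum_of_nat_of_neg_add_one h h2, h.tsum_eq_zero_add]
  simp only [uT_neg]
  push_cast
  rw [show uT q x 0 = 1 by simp [uT, tC]]
  ring

lemma odd_prod (q : ℂ) (N : ℕ) :
    pochA q (2 * N) = pochA (q ^ 2) N * ∏ m ∈ Finset.range N, (1 - q ^ (2 * m + 1)) := by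
  induction N with
  | zero => simp [pochA]
  | succ N ih =>
    simp only [pochA, show 2 * (N + 1) = 2 * N + 1 + 1 by ring, Finset.prod_range_succ] at *
    rw [ih, ← pow_mul]
    ring

lemma theta_limit (q x : ℂ) (h0 : q ≠ 0) (hq : ‖q‖ < 1) (L : ℂ) (hL : L ≠ 0)
    (h : Tendsto (pochA (q ^ 2)) atTop (𝓝 L)) :
    Tendsto (fun N => ∏ m ∈ Finset.range N, (1 + q ^ (4 * m + 2) + q ^ (2 * m + 1) * (x ^ 2 - 2)))
      atTop (𝓝 (L⁻¹ * ∑' n : ℤ, uT q x n)) := by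
  obtain ⟨K, hK0, hK⟩ := bI_bound _ L hL h
  obtain ⟨M, hM⟩ := (Metric.isBounded_range_of_tendsto _ h).exists_norm_le
  have hM0 : 0 ≤ M := (norm_nonneg _).trans (hM _ ⟨0, rfl⟩)
  rw [← tsum_mul_left]
  have := tendsto_tsum_of_dominated_convergence (𝓕 := atTop)
    (f := fun (N : ℕ) (n : ℤ) => cF q N n * tC x n) (g := fun n => L⁻¹ * uT q x n)
    ((uT_summable q x hq).mul_left (M * K * K)) (fun n => ?_) (Eventually.of_forall fun N n => ?_)
  · refine this.congr fun N => (finite_triple q x h0 hq N).tsum_eq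
  · have b := bI_tendsto _ L hL h
    have c1 : Tendsto (fun N : ℕ => (N : ℤ) - n) atTop atTop :=
      tendsto_atTop_add_const_right _ (-n) tendsto_natCast_atTop_atTop
    have c2 : Tendsto (fun N : ℕ => (N : ℤ) + n) atTop atTop :=
      tendsto_atTop_add_const_right _ n tendsto_natCast_atTop_atTop
    have c3 : Tendsto (fun N : ℕ => 2 * N) atTop atTop :=
      tendsto_id.const_mul_atTop' (by norm_num)
    have := ((((h.comp c3).mul (b.comp c1)).mul (b.comp c2)).mul_const (q ^ (n ^ 2))).mul_const
      (tC x n)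
    have e : L⁻¹ * uT q x n = L * L⁻¹ * L⁻¹ * q ^ (n ^ 2) * tC x n := by
      rw [uT]
      field_simp
    rw [e]
    exact this
  · rw [cF, uT, norm_mul, norm_mul, norm_mul, norm_mul, norm_mul, mul_assoc _ ‖q ^ n ^ 2‖]
    gcongr
    · exact hM _ ⟨_, rfl⟩
    · exact hK _
    · exact hK _

lemma main_eq (q x : ℂ) (h0 : q ≠ 0) (hq : ‖q‖ < 1) :
    ∑' n : ℤ, uT q x n = (∏' m : ℕ, (1 - q ^ (m + 1)) / (1 + q ^ (m + 1))) *
      ∏' m, (1 + x ^ 2 * macG q m) := by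
  have hQ : ‖q ^ 2‖ < 1 := by
    rw [norm_pow]; exact pow_lt_one₀ (norm_nonneg _) hq (by omega)
  obtain ⟨L, hL, h⟩ := pochA_tendsto (q ^ 2) hQ
  obtain ⟨E, hE, hE'⟩ := pochA_tendsto q hq
  obtain ⟨F, hF, hF'⟩ := plus_tendsto q hq
  have hEF : L = E * F := by
    refine tendsto_nhds_unique h ((hE'.mul hF').congr fun N => ?_)
    simp only [pochA]
    rw [← Finset.prod_mul_distrib]
    refine Finset.prod_congr rfl fun j _ => ?_
    ring
  have hr : ∏' m : ℕ, (1 - q ^ (m + 1)) / (1 + q ^ (m + 1)) = E / F := by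
    refine tendsto_nhds_unique (ratio_tendsto q hq) ((hE'.div hF' hF).congr fun N => ?_)
    simp only [pochA, Pi.div_apply, Finset.prod_div_distrib]
  have c3 : Tendsto (fun N : ℕ => 2 * N) atTop atTop :=
    tendsto_id.const_mul_atTop' (by norm_num)
  have hO : Tendsto (fun N => ∏ m ∈ Finset.range N, (1 - q ^ (2 * m + 1))) atTop (𝓝 (E / L)) := by
    refine ((hE'.comp c3).div h hL).congr fun N => ?_
    have := pochA_ne _ hQ N
    simp only [Function.comp, Pi.div_apply]
    rw [odd_prod]
    field_simp
  have hs : Summable (fun m => ‖x ^ 2 * macG q m‖) := by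
    simp only [norm_mul]
    exact (macG_summable q hq).mul_left _
  have hP := (multipliable_one_add_of_summable hs).hasProd.tendsto_prod_nat
  have key := tendsto_nhds_unique (theta_limit q x h0 hq L hL h)
    (((hO.pow 2).mul hP).congr fun N => by
      rw [← Finset.prod_pow, ← Finset.prod_mul_distrib]
      refine Finset.prod_congr rfl fun m _ => ?_
      have := one_sub_pow_ne q hq (2 * m)
      rw [macG]
      field_simp
      ring)
  rw [hr]
  have : ∑' n : ℤ, uT q x n = L * (L⁻¹ * ∑' n : ℤ, uT q x n) := by field_simp
  rw [this, key, hEF]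
  field_simp

lemma main_eq_zero (x : ℂ) :
    ∑' n : ℤ, uT 0 x n = (∏' m : ℕ, (1 - (0 : ℂ) ^ (m + 1)) / (1 + (0 : ℂ) ^ (m + 1))) *
      ∏' m, (1 + x ^ 2 * macG 0 m) := by
  have h1 : ∀ m, macG 0 m = 0 := fun m => by simp [macG]
  rw [tsum_eq_single 0 (fun n hn => by simp [uT, zero_zpow _ (pow_ne_zero 2 hn)])]
  simp [h1, uT, tC]


theorem stmt1 (q x : ℂ) (hq : ‖q‖ < 1) :
    Summable (fun n : ℕ =>
      (Polynomial.Chebyshev.T ℂ (2 * ((n : ℤ) + 1))).eval (x / 2) * q ^ ((n + 1) ^ 2)) ∧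
    Summable (fun k : ℕ => macC k q * x ^ (2 * k)) ∧
    1 + 2 * ∑' n : ℕ,
        (Polynomial.Chebyshev.T ℂ (2 * ((n : ℤ) + 1))).eval (x / 2) * q ^ ((n + 1) ^ 2) =
      (∏' m : ℕ, (1 - q ^ (m + 1)) / (1 + q ^ (m + 1))) *
        ∑' k : ℕ, macC k q * x ^ (2 * k) := by
  have e : (fun n : ℕ =>
      (Polynomial.Chebyshev.T ℂ (2 * ((n : ℤ) + 1))).eval (x / 2) * q ^ ((n + 1) ^ 2))
      = fun n : ℕ => uT q x ((n : ℤ) + 1) := by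
    funext n
    have := uT_nat q x (n + 1)
    push_cast at this
    rw [this, tC, mul_comm]
  have hm := mac_expand q x hq
  refine ⟨?_, hm.summable, ?_⟩
  · rw [e]
    have := (summable_nat_add_iff 1).mpr (uT_summable_nat q x hq).of_norm
    exact_mod_cast this
  · rw [e, hm.tsum_eq, ← uT_tsum q x hq]
    rcases eq_or_ne q 0 with rfl | h0
    · exact main_eq_zero x
    · exact main_eq q x h0 hq
end

section
/- For every integer k ≥ 1 and every complex number q with |q| < 1, one has (2k+1)! · (∏_{m=1}^∞ (1 − q^m))³ · A_k(q) = (−1)^k · ∑_{n=k}^∞ (−1)^n (2n+1) · ((n+k)!/(n−k)!) · q^{n(n+1)/2}. -/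
open Filter Topology Finset

/-- finite q-Pochhammer symbol -/
noncomputable def qp (q : ℂ) (n : ℕ) : ℂ := ∏ i ∈ range n, (1 - q ^ (i + 1))

lemma qp_succ (q : ℂ) (n : ℕ) : qp q (n + 1) = qp q n * (1 - q ^ (n + 1)) := by
  simp [qp, prod_range_succ]

lemma one_sub_ne (q : ℂ) (hq : ‖q‖ < 1) (n : ℕ) : 1 - q ^ (n + 1) ≠ 0 := by
  intro h
  have h1 : q ^ (n + 1) = 1 := (sub_eq_zero.mp h).symm
  have h2 : ‖q‖ ^ (n + 1) = 1 := by rw [← norm_pow, h1, norm_one]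
  have h3 : ‖q‖ ^ (n + 1) < 1 := pow_lt_one₀ (norm_nonneg _) hq (by simp)
  linarith

lemma qp_ne (q : ℂ) (hq : ‖q‖ < 1) (n : ℕ) : qp q n ≠ 0 :=
  prod_ne_zero_iff.mpr fun i _ => one_sub_ne q hq i

/-- triangular numbers -/
def tri (n : ℕ) : ℕ := n * (n + 1) / 2

lemma tri_succ (n : ℕ) : tri (n + 1) = tri n + (n + 1) := by
  unfold tri
  have : (n + 1) * (n + 1 + 1) = n * (n + 1) + 2 * (n + 1) := by ring
  rw [this, Nat.add_mul_div_left _ _ (by norm_num)]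

/-- coefficients in the finite triple product -/
noncomputable def bb (q : ℂ) (N n : ℕ) : ℂ :=
  if n ≤ N then (-1) ^ n * q ^ tri n * (qp q (2 * N + 1) / (qp q (N - n) * qp q (N + n + 1))) else 0

lemma bb_zero (q : ℂ) {N n : ℕ} (h : N < n) : bb q N n = 0 := by
  simp [bb, h]

lemma bb_le (q : ℂ) (n d : ℕ) : bb q (n + d) n =
    (-1) ^ n * q ^ tri n * (qp q (2 * (n + d) + 1) / (qp q d * qp q (n + d + n + 1))) := by
  simp [bb]

lemma bb_le' (q : ℂ) (n d : ℕ) {N : ℕ} (h : N = n + d) : bb q N n =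
    (-1) ^ n * q ^ tri n * (qp q (2 * (n + d) + 1) / (qp q d * qp q (n + d + n + 1))) := by
  subst h; exact bb_le q n d

lemma bb_rec0 (q : ℂ) (hq : ‖q‖ < 1) (N : ℕ) :
    bb q (N + 1) 0 = (1 + (q ^ (N + 1)) ^ 2) * bb q N 0
      - q ^ (N + 1) * (- bb q N 0 + bb q N 1) := by
  rcases N with _ | d
  · have h1 := one_sub_ne q hq 0
    have h2 := one_sub_ne q hq 1
    simp only [zero_add, pow_one] at h1
    have e : (1 : ℕ) + 1 = 2 := rfl
    rw [e] at h2
    simp [bb, tri, qp, prod_range_succ]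
    field_simp
    ring
  · have e1 := bb_le' q 0 (d + 2) (show (d + 1 + 1) = _ by omega)
    have e2 := bb_le' q 0 (d + 1) (show (d + 1) = _ by omega)
    have e3 := bb_le' q 1 d (show (d + 1) = _ by omega)
    rw [e1, e2, e3]
    have i1 : 2 * (0 + (d + 2)) + 1 = 2 * d + 3 + 1 + 1 := by ring
    have i2 : 2 * (0 + (d + 1)) + 1 = 2 * d + 3 := by ring
    have i3 : 2 * (1 + d) + 1 = 2 * d + 3 := by ring
    have i4 : 0 + (d + 2) + 0 + 1 = d + 2 + 1 := by ring
    have i5 : 0 + (d + 1) + 0 + 1 = d + 2 := by ring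
    have i6 : 1 + d + 1 + 1 = d + 2 + 1 := by ring
    rw [i1, i2, i3, i4, i5, i6]
    have j : d + 2 = d + 1 + 1 := rfl
    simp only [qp_succ, j]
    have h0 := qp_ne q hq d
    have h0' := qp_ne q hq (2 * d + 1 + 1)
    have h1 := one_sub_ne q hq d
    have h2 := one_sub_ne q hq (d + 1)
    have h3 := one_sub_ne q hq (d + 2)
    simp only [tri]
    have h4 := one_sub_ne q hq (d + 1 + 1)
    field_simp
    ring

lemma bb_rec (q : ℂ) (hq : ‖q‖ < 1) (N n : ℕ) :
    bb q (N + 1) (n + 1) = (1 + (q ^ (N + 1)) ^ 2) * bb q N (n + 1)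
      - q ^ (N + 1) * (bb q N n + bb q N (n + 2)) := by
  rcases lt_or_ge N n with h | h
  · rw [bb_zero q (by omega), bb_zero q (by omega), bb_zero q (by omega), bb_zero q (by omega)]
    simp
  obtain ⟨d, rfl⟩ := Nat.exists_eq_add_of_le h
  have hd : (-1 : ℂ) ^ (n + 1) = - (-1) ^ n := by ring
  have hd2 : (-1 : ℂ) ^ (n + 2) = (-1) ^ n := by ring
  rcases d with _ | _ | d
  · rw [bb_zero q (show n + 0 < n + 1 by omega), bb_zero q (show n + 0 < n + 2 by omega), bb_le q n 0]
    have e1 := bb_le' q (n + 1) 0 (show (n + 0 + 1) = _ by omega)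
    rw [e1]
    have i1 : 2 * (n + 1 + 0) + 1 = 2 * n + 1 + 1 + 1 := by ring
    have i2 : n + 1 + 0 + (n + 1) + 1 = 2 * n + 1 + 1 + 1 := by ring
    have i3 : n + 0 + n + 1 = 2 * n + 1 := by ring
    have i4 : 2 * (n + 0) + 1 = 2 * n + 1 := by ring
    rw [i1, i2, i3, i4, hd, tri_succ, pow_add q (tri n)]
    have h1 := qp_ne q hq (2 * n + 1 + 1 + 1)
    have h2 := qp_ne q hq (2 * n + 1)
    have h3 := qp_ne q hq 0
    field_simp
    simp
    ring
  · rw [bb_zero q (show n + (0 + 1) < n + 2 by omega), bb_le q n (0 + 1)]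
    have e1 := bb_le' q (n + 1) 1 (show (n + (0 + 1) + 1) = _ by omega)
    have e2 := bb_le' q (n + 1) 0 (show (n + (0 + 1)) = _ by omega)
    rw [e1, e2]
    have i1 : 2 * (n + 1 + 1) + 1 = 2 * n + 2 + 1 + 1 + 1 := by ring
    have i2 : n + 1 + 1 + (n + 1) + 1 = 2 * n + 2 + 1 + 1 := by ring
    have i3 : n + 1 + 0 + (n + 1) + 1 = 2 * n + 2 + 1 := by ring
    have i4 : 2 * (n + (0 + 1)) + 1 = 2 * n + 2 + 1 := by ring
    have i5 : n + (0 + 1) + n + 1 = 2 * n + 2 := by ring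
    have i6 : 2 * (n + 1 + 0) + 1 = 2 * n + 2 + 1 := by ring
    have q1 : qp q 1 = 1 - q := by simp [qp]
    have q0 : qp q 0 = 1 := by simp [qp]
    rw [i1, i2, i3, i4, i5, hd, tri_succ, pow_add q (tri n), zero_add, q1, q0,
      qp_succ q (2 * n + 2 + 1 + 1), qp_succ q (2 * n + 2 + 1), qp_succ q (2 * n + 2)]
    have h1 := qp_ne q hq (2 * n + 2)
    have h2 := one_sub_ne q hq 0
    rw [zero_add, pow_one] at h2
    have h4 := one_sub_ne q hq (2 * n + 2)
    have h5 := one_sub_ne q hq (2 * n + 2 + 1)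
    field_simp
    ring
  · have e0 := bb_le' q n (d + 2) (show (n + (d + 1 + 1)) = _ by omega)
    have e1 := bb_le' q (n + 1) (d + 2) (show (n + (d + 1 + 1) + 1) = _ by omega)
    have e2 := bb_le' q (n + 1) (d + 1) (show (n + (d + 1 + 1)) = _ by omega)
    have e3 := bb_le' q (n + 2) d (show (n + (d + 1 + 1)) = _ by omega)
    rw [e0, e1, e2, e3]
    have i1 : 2 * (n + 1 + (d + 2)) + 1 = 2 * n + 2 * d + 5 + 1 + 1 := by ring
    have i2 : 2 * (n + 1 + (d + 1)) + 1 = 2 * n + 2 * d + 5 := by ring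
    have i3 : 2 * (n + (d + 2)) + 1 = 2 * n + 2 * d + 5 := by ring
    have i4 : 2 * (n + 2 + d) + 1 = 2 * n + 2 * d + 5 := by ring
    have i5 : n + 1 + (d + 2) + (n + 1) + 1 = 2 * n + d + 3 + 1 + 1 := by ring
    have i6 : n + 1 + (d + 1) + (n + 1) + 1 = 2 * n + d + 3 + 1 := by ring
    have i7 : n + (d + 2) + n + 1 = 2 * n + d + 3 := by ring
    have i8 : n + 2 + d + (n + 2) + 1 = 2 * n + d + 3 + 1 + 1 := by ring
    have t2 : tri (n + 2) = tri n + (n + 1) + (n + 2) := by rw [tri_succ, tri_succ]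
    rw [i1, i2, i3, i4, i5, i6, i7, i8, hd, hd2, t2, tri_succ, pow_add q (tri n + (n + 1)),
      pow_add q (tri n), show d + 2 = d + 1 + 1 from rfl,
      qp_succ q (2 * n + 2 * d + 5 + 1), qp_succ q (2 * n + 2 * d + 5),
      qp_succ q (2 * n + d + 3 + 1), qp_succ q (2 * n + d + 3), qp_succ q (d + 1), qp_succ q d]
    have h1 := qp_ne q hq (2 * n + 2 * d + 5)
    have h2 := qp_ne q hq (2 * n + d + 3)
    have h3 := qp_ne q hq d
    have h4 := one_sub_ne q hq (2 * n + d + 3)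
    have h5 := one_sub_ne q hq (2 * n + d + 3 + 1)
    have h6 := one_sub_ne q hq d
    have h7 := one_sub_ne q hq (d + 1)
    field_simp
    ring

/-- unsigned Chebyshev-like coefficients -/
def VV (n k : ℕ) : ℕ := (n + k + 1).choose (2 * k + 1) + (n + k).choose (2 * k + 1)

noncomputable def ww (k n : ℕ) : ℂ := (-1) ^ k * (VV n k : ℂ)

lemma choose_second (m j : ℕ) :
    (m + 2).choose (j + 2) + m.choose (j + 2) = 2 * (m + 1).choose (j + 2) + m.choose j := by
  have h1 := Nat.choose_succ_succ (m + 1) (j + 1)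
  have h2 := Nat.choose_succ_succ m (j + 1)
  have h3 := Nat.choose_succ_succ m j
  simp only [Nat.succ_eq_add_one, add_assoc, Nat.reduceAdd] at *
  omega

lemma VV_rec (n k : ℕ) :
    VV (n + 2) (k + 1) + VV n (k + 1) = 2 * VV (n + 1) (k + 1) + VV (n + 1) k := by
  have h1 := choose_second (n + k + 2) (2 * k + 1)
  have h2 := choose_second (n + k + 1) (2 * k + 1)
  unfold VV
  have e : 2 * (k + 1) + 1 = 2 * k + 1 + 2 := by ring
  have a1 : n + 2 + (k + 1) + 1 = n + k + 2 + 2 := by ring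
  have a2 : n + 2 + (k + 1) = n + k + 2 + 1 := by ring
  have a3 : n + (k + 1) + 1 = n + k + 2 := by ring
  have a4 : n + (k + 1) = n + k + 1 := by ring
  have a5 : n + 1 + (k + 1) + 1 = n + k + 2 + 1 := by ring
  have a6 : n + 1 + (k + 1) = n + k + 2 := by ring
  have a7 : n + 1 + k + 1 = n + k + 2 := by ring
  have a8 : n + 1 + k = n + k + 1 := by ring
  rw [e, a1, a2, a3, a4, a5, a6, a7, a8]
  have b1 : n + k + 1 + 2 = n + k + 2 + 1 := by ring
  have b2 : n + k + 1 + 1 = n + k + 2 := by ring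
  rw [b1, b2] at h2
  omega

lemma VV_rec0 (k : ℕ) : VV 1 (k + 1) = 3 * VV 0 (k + 1) + VV 0 k := by
  unfold VV
  rcases k with _ | k
  · rfl
  · rw [Nat.choose_eq_zero_of_lt (show 0 + (k + 1 + 1) + 1 < 2 * (k + 1 + 1) + 1 by omega),
      Nat.choose_eq_zero_of_lt (show 0 + (k + 1 + 1) < 2 * (k + 1 + 1) + 1 by omega),
      Nat.choose_eq_zero_of_lt (show 0 + (k + 1) + 1 < 2 * (k + 1) + 1 by omega),
      Nat.choose_eq_zero_of_lt (show 0 + (k + 1) < 2 * (k + 1) + 1 by omega),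
      Nat.choose_eq_zero_of_lt (show 1 + (k + 1 + 1) + 1 < 2 * (k + 1 + 1) + 1 by omega),
      Nat.choose_eq_zero_of_lt (show 1 + (k + 1 + 1) < 2 * (k + 1 + 1) + 1 by omega)]

lemma VV_zero (n : ℕ) : VV n 0 = 2 * n + 1 := by simp [VV]; ring

noncomputable def LL (u : ℕ → ℂ) : ℕ → ℂ
  | 0 => u 1 - u 0
  | n + 1 => u (n + 2) + u n

noncomputable def SS (a : ℕ → ℂ) : ℕ → ℂ
  | 0 => - a 0 + a 1
  | n + 1 => a n + a (n + 2)

lemma abel (a u : ℕ → ℂ) (M : ℕ) : ∑ n ∈ range (M + 1), SS a n * u n =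
    ∑ n ∈ range (M + 1), a n * LL u n + a (M + 1) * u M - a M * u (M + 1) := by
  induction M with
  | zero => simp [SS, LL]; ring
  | succ M ih => rw [sum_range_succ, ih, sum_range_succ _ (M + 1)]; simp only [SS, LL]; ring

lemma LL_ww0 (n : ℕ) : LL (ww 0) n = 2 * ww 0 n := by
  rcases n with _ | n <;> simp [LL, ww, VV_zero] <;> ring

lemma LL_ww (k n : ℕ) : LL (ww (k + 1)) n = 2 * ww (k + 1) n - ww k n := by
  rcases n with _ | n
  · have h : (VV 1 (k + 1) : ℂ) = 3 * VV 0 (k + 1) + VV 0 k := by exact_mod_cast VV_rec0 k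
    simp only [LL, ww, h]; ring
  · have h : (VV (n + 2) (k + 1) : ℂ) + VV n (k + 1) = 2 * VV (n + 1) (k + 1) + VV (n + 1) k := by
      exact_mod_cast VV_rec n k
    simp only [LL, ww]
    linear_combination (-1) ^ (k + 1) * h

lemma bb_SS (q : ℂ) (hq : ‖q‖ < 1) (N n : ℕ) :
    bb q (N + 1) n = (1 + (q ^ (N + 1)) ^ 2) * bb q N n - q ^ (N + 1) * SS (bb q N) n := by
  rcases n with _ | n
  · exact bb_rec0 q hq N
  · exact bb_rec q hq N n

lemma sum_step (q : ℂ) (hq : ‖q‖ < 1) (N : ℕ) (u : ℕ → ℂ) :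
    ∑ n ∈ range (N + 2), bb q (N + 1) n * u n =
      ∑ n ∈ range (N + 1), bb q N n * ((1 + (q ^ (N + 1)) ^ 2) * u n - q ^ (N + 1) * LL u n) := by
  have h := abel (bb q N) u (N + 1)
  rw [bb_zero q (show N < N + 1 by omega), bb_zero q (show N < N + 1 + 1 by omega)] at h
  have h2 : ∑ n ∈ range (N + 1), bb q N n *
      ((1 + (q ^ (N + 1)) ^ 2) * u n - q ^ (N + 1) * LL u n) =
      ∑ n ∈ range (N + 2), bb q N n *
      ((1 + (q ^ (N + 1)) ^ 2) * u n - q ^ (N + 1) * LL u n) := by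
    rw [sum_range_succ _ (N + 1), bb_zero q (show N < N + 1 by omega)]; simp
  rw [h2]
  simp only [bb_SS q hq, sub_mul, mul_sub, sum_sub_distrib]
  congr 1
  · exact sum_congr rfl fun _ _ => by ring
  · have e1 : ∑ n ∈ range (N + 2), q ^ (N + 1) * SS (bb q N) n * u n =
        q ^ (N + 1) * ∑ n ∈ range (N + 2), SS (bb q N) n * u n := by
      rw [mul_sum]; exact sum_congr rfl fun _ _ => by ring
    rw [e1, h, zero_mul, zero_mul, add_zero, sub_zero, mul_sum]
    exact sum_congr rfl fun _ _ => by ring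

/-- the summand -/
noncomputable def ff (q : ℂ) (i : ℕ) : ℂ := q ^ (i + 1) / (1 - q ^ (i + 1)) ^ 2

noncomputable def AA (q : ℂ) (N k : ℕ) : ℂ := ∑ s ∈ powersetCard k (range N), ∏ i ∈ s, ff q i

lemma AA_zero (q : ℂ) (N : ℕ) : AA q N 0 = 1 := by simp [AA]

lemma AA_succ (q : ℂ) (N k : ℕ) : AA q (N + 1) (k + 1) = AA q N (k + 1) + ff q N * AA q N k := by
  unfold AA
  rw [range_add_one, powersetCard_succ_insert notMem_range_self, sum_union, mul_sum]
  · congr 1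
    rw [sum_image]
    · refine sum_congr rfl fun s hs => ?_
      rw [prod_insert]
      intro h
      exact notMem_range_self ((mem_powersetCard.mp hs).1 h)
    · intro s hs t ht hst
      have hs' : N ∉ s := fun h => notMem_range_self ((mem_powersetCard.mp hs).1 h)
      have ht' : N ∉ t := fun h => notMem_range_self ((mem_powersetCard.mp ht).1 h)
      rw [← erase_insert hs', ← erase_insert ht']
      exact congrArg (fun x => x.erase N) hst
  · rw [disjoint_left]
    intro s hs ht
    obtain ⟨t, _, rfl⟩ := mem_image.mp ht
    exact notMem_range_self ((mem_powersetCard.mp hs).1 (mem_insert_self N t))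

theorem finite_id (q : ℂ) (hq : ‖q‖ < 1) (N : ℕ) : ∀ k,
    qp q N ^ 2 * AA q N k = ∑ n ∈ range (N + 1), bb q N n * ww k n := by
  induction N with
  | zero =>
    intro k
    have h1 := one_sub_ne q hq 0
    simp only [zero_add, pow_one] at h1
    rcases k with _ | k
    · simp [AA, qp, bb, ww, VV, tri, h1]
    · have : (VV 0 (k + 1)) = 0 := by
        unfold VV
        rw [Nat.choose_eq_zero_of_lt (by omega), Nat.choose_eq_zero_of_lt (by omega)]
      rw [AA, powersetCard_eq_empty.mpr (by simp)]
      simp [ww, this]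
  | succ N ih =>
    intro k
    rw [sum_step q hq]
    have hn := one_sub_ne q hq N
    rcases k with _ | k
    · have i0 := ih 0
      rw [AA_zero] at i0 ⊢
      simp only [LL_ww0]
      have : ∑ n ∈ range (N + 1), bb q N n *
          ((1 + (q ^ (N + 1)) ^ 2) * ww 0 n - q ^ (N + 1) * (2 * ww 0 n)) =
          (1 - q ^ (N + 1)) ^ 2 * ∑ n ∈ range (N + 1), bb q N n * ww 0 n := by
        rw [mul_sum]; exact sum_congr rfl fun _ _ => by ring
      rw [this, ← i0, qp_succ]; ring
    · have : ∑ n ∈ range (N + 1), bb q N n *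
          ((1 + (q ^ (N + 1)) ^ 2) * ww (k + 1) n - q ^ (N + 1) * LL (ww (k + 1)) n) =
          (1 - q ^ (N + 1)) ^ 2 * ∑ n ∈ range (N + 1), bb q N n * ww (k + 1) n
          + q ^ (N + 1) * ∑ n ∈ range (N + 1), bb q N n * ww k n := by
        rw [mul_sum, mul_sum, ← sum_add_distrib]
        exact sum_congr rfl fun _ _ => by rw [LL_ww]; ring
      rw [this, ← ih, ← ih, AA_succ, qp_succ, ff]
      field_simp

/-! limits -/

lemma summable_q (q : ℂ) (hq : ‖q‖ < 1) : Summable fun i : ℕ => ‖q ^ (i + 1)‖ := by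
  simp only [norm_pow]
  exact (summable_nat_add_iff 1).mpr (summable_geometric_of_lt_one (norm_nonneg _) hq)

lemma qp_tendsto (q : ℂ) (hq : ‖q‖ < 1) :
    Tendsto (qp q) atTop (𝓝 (∏' m : ℕ, (1 - q ^ (m + 1)))) := by
  have h : Multipliable fun m : ℕ => 1 + (- q ^ (m + 1)) :=
    multipliable_one_add_of_summable (by simpa using summable_q q hq)
  have := h.hasProd.tendsto_prod_nat
  simp only [← sub_eq_add_neg] at this
  exact this

lemma tprod_ne (q : ℂ) (hq : ‖q‖ < 1) : (∏' m : ℕ, (1 - q ^ (m + 1))) ≠ 0 := by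
  have := tprod_one_add_ne_zero_of_summable (f := fun m : ℕ => - q ^ (m + 1))
    (fun i => by simpa [← sub_eq_add_neg] using one_sub_ne q hq i)
    (by simpa using summable_q q hq)
  simpa only [← sub_eq_add_neg] using this

lemma qp_inv_bdd (q : ℂ) (hq : ‖q‖ < 1) : ∃ C : ℝ, 0 ≤ C ∧ ∀ n, ‖(qp q n)⁻¹‖ ≤ C := by
  have h := ((qp_tendsto q hq).inv₀ (tprod_ne q hq)).norm.bddAbove_range
  obtain ⟨C, hC⟩ := h
  have hC' : ∀ n, ‖(qp q n)⁻¹‖ ≤ C := fun n => hC ⟨n, rfl⟩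
  exact ⟨C, (norm_nonneg _).trans (hC' 0), hC'⟩

lemma qp_bdd (q : ℂ) (hq : ‖q‖ < 1) : ∃ C : ℝ, 0 ≤ C ∧ ∀ n, ‖qp q n‖ ≤ C := by
  obtain ⟨C, hC⟩ := (qp_tendsto q hq).norm.bddAbove_range
  have hC' : ∀ n, ‖qp q n‖ ≤ C := fun n => hC ⟨n, rfl⟩
  exact ⟨C, (norm_nonneg _).trans (hC' 0), hC'⟩

lemma ff_summable (q : ℂ) (hq : ‖q‖ < 1) : Summable fun i => ‖ff q i‖ := by
  refine Summable.of_nonneg_of_le (fun _ => norm_nonneg _) (fun i => ?_)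
    ((summable_q q hq).mul_right (((1 - ‖q‖) ^ 2)⁻¹))
  rw [ff, norm_div, div_eq_mul_inv]
  have h0 : 0 < 1 - ‖q‖ := by linarith
  have h1 : 1 - ‖q‖ ≤ ‖1 - q ^ (i + 1)‖ := by
    have := norm_sub_norm_le (1 : ℂ) (q ^ (i + 1))
    rw [norm_one, norm_pow] at this
    have h3 : ‖q‖ ^ (i + 1) ≤ ‖q‖ := pow_le_of_le_one (norm_nonneg _) hq.le (by simp)
    linarith
  rw [norm_pow (1 - q ^ (i + 1))]
  gcongr

noncomputable def gg (q : ℂ) (k : ℕ) (s : Finset ℕ) : ℂ := if s.card = k then ∏ i ∈ s, ff q i else 0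

lemma gg_summable (q : ℂ) (hq : ‖q‖ < 1) (k : ℕ) : Summable (gg q k) := by
  have h := summable_finsetProd_of_summable_norm (ff_summable q hq)
  have := h.indicator {s : Finset ℕ | s.card = k}
  refine this.congr fun s => ?_
  simp [gg, Set.indicator_apply]

lemma AA_tendsto (q : ℂ) (hq : ‖q‖ < 1) (k : ℕ) :
    Tendsto (fun N => AA q N k) atTop (𝓝 (∑' s, gg q k s)) := by
  have h := (gg_summable q hq k).hasSum
  have h2 := h.comp (tendsto_finset_powerset_atTop_atTop.comp tendsto_finset_range)
  refine h2.congr fun N => ?_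
  rw [AA, powersetCard_eq_filter, sum_filter]
  rfl

lemma macA_eq (q : ℂ) (k : ℕ) : macA k q = ∑' s, gg q k s := by
  let φ : {m : Fin k → ℕ // StrictMono m ∧ ∀ i, 0 < m i} → Finset ℕ :=
    fun m => univ.image fun i => m.1 i - 1
  have hmono : ∀ m : {m : Fin k → ℕ // StrictMono m ∧ ∀ i, 0 < m i},
      StrictMono fun i => m.1 i - 1 := by
    intro m i j hij
    have := m.2.1 hij
    have := m.2.2 i
    show m.1 i - 1 < m.1 j - 1
    omega
  have hcard : ∀ m, (φ m).card = k := by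
    intro m
    rw [card_image_of_injective _ (hmono m).injective]; simp
  have hinj : Function.Injective φ := by
    intro m m' h
    have hr : Set.range (fun i => m.1 i - 1) = Set.range (fun i => m'.1 i - 1) := by
      have := congrArg (fun s : Finset ℕ => (s : Set ℕ)) h
      simpa [φ] using this
    have := ((hmono m).range_inj (hmono m')).mp hr
    apply Subtype.ext
    funext i
    have h1 := congrFun this i
    have := m.2.2 i
    have := m'.2.2 i
    omega
  have hsupp : Function.support (gg q k) ⊆ Set.range φ := by
    intro s hs
    have hc : s.card = k := by
      by_contra hne
      exact hs (by simp [gg, hne])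
    refine ⟨⟨fun i => s.orderEmbOfFin hc i + 1, ?_, fun i => by simp⟩, ?_⟩
    · intro i j hij
      simpa using hij
    · simp only [φ, Nat.add_sub_cancel]
      exact image_orderEmbOfFin_univ s hc
  rw [← hinj.tsum_eq hsupp, macA]
  refine tsum_congr fun m => ?_
  rw [gg, if_pos (hcard m), prod_image fun a _ b _ h => (hmono m).injective h]
  simp only [ff]
  rw [← prod_pow_eq_pow_sum, ← prod_div_distrib]
  refine prod_congr rfl fun i _ => ?_
  rw [Nat.sub_add_cancel (m.2.2 i)]

lemma le_tri (n : ℕ) : n ≤ tri n := by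
  induction n with
  | zero => simp
  | succ n ih => rw [tri_succ]; omega

lemma VV_le (n k : ℕ) : VV n k ≤ 2 * (n + (2 * k + 1)).choose (2 * k + 1) := by
  unfold VV
  have h1 := Nat.choose_le_choose (2 * k + 1) (show n + k + 1 ≤ n + (2 * k + 1) by omega)
  have h2 := Nat.choose_le_choose (2 * k + 1) (show n + k ≤ n + (2 * k + 1) by omega)
  omega

lemma norm_ww (k n : ℕ) : ‖ww k n‖ = VV n k := by simp [ww]

theorem limit_id (q : ℂ) (hq : ‖q‖ < 1) (k : ℕ) :
    (∏' m : ℕ, (1 - q ^ (m + 1))) ^ 3 * macA k q =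
      ∑' n : ℕ, (-1) ^ n * q ^ tri n * ww k n := by
  set P := ∏' m : ℕ, (1 - q ^ (m + 1)) with hP
  have hP0 : P ≠ 0 := tprod_ne q hq
  have hT := qp_tendsto q hq
  rw [← hP] at hT
  obtain ⟨C, hC0, hC⟩ := qp_bdd q hq
  obtain ⟨D, hD0, hD⟩ := qp_inv_bdd q hq
  have key : Tendsto (fun N => ∑' n, bb q N n * ww k n) atTop
      (𝓝 (∑' n, ((-1) ^ n * q ^ tri n * (P / (P * P))) * ww k n)) := by
    refine tendsto_tsum_of_dominated_convergence
      (bound := fun n => (C * (D * D) * 2) *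
        (((n + (2 * k + 1)).choose (2 * k + 1) : ℝ) * ‖q‖ ^ n)) ?_ ?_ ?_
    · refine Summable.mul_left _ ?_
      exact summable_choose_mul_geometric_of_norm_lt_one (2 * k + 1) (by simpa using hq)
    · intro n
      refine Tendsto.mul_const _ ?_
      have h1 : Tendsto (fun N => (-1) ^ n * q ^ tri n *
          (qp q (2 * N + 1) / (qp q (N - n) * qp q (N + n + 1)))) atTop
          (𝓝 ((-1) ^ n * q ^ tri n * (P / (P * P)))) := by
        refine Tendsto.const_mul _ (Tendsto.div ?_ (Tendsto.mul ?_ ?_) (mul_ne_zero hP0 hP0))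
        · exact hT.comp (tendsto_atTop_mono (fun N => by show N ≤ 2 * N + 1; omega) tendsto_id)
        · exact hT.comp (tendsto_sub_atTop_nat n)
        · exact hT.comp (tendsto_atTop_mono (fun N => by show N ≤ N + n + 1; omega) tendsto_id)
      refine h1.congr' ?_
      filter_upwards [eventually_ge_atTop n] with N hN
      simp [bb, hN]
    · refine Eventually.of_forall fun N n => ?_
      rw [norm_mul, norm_ww]
      have hb : ‖bb q N n‖ ≤ ‖q‖ ^ n * (C * (D * D)) := by
        unfold bb
        split_ifs with h
        · rw [div_eq_mul_inv, mul_inv]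
          simp only [norm_mul, norm_pow, norm_neg, norm_one, one_pow, one_mul]
          have : ‖q‖ ^ tri n ≤ ‖q‖ ^ n :=
            pow_le_pow_of_le_one (norm_nonneg _) hq.le (le_tri n)
          have a1 := hC (2 * N + 1)
          have a2 := hD (N - n)
          have a3 := hD (N + n + 1)
          gcongr
        · simp; positivity
      have hv : (VV n k : ℝ) ≤ 2 * ((n + (2 * k + 1)).choose (2 * k + 1) : ℝ) := by
        exact_mod_cast VV_le n k
      calc ‖bb q N n‖ * (VV n k : ℝ)
          ≤ (‖q‖ ^ n * (C * (D * D))) * (2 * ((n + (2 * k + 1)).choose (2 * k + 1) : ℝ)) := by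
            gcongr
        _ = _ := by ring
  have key2 : Tendsto (fun N => qp q N ^ 2 * AA q N k) atTop (𝓝 (P ^ 2 * macA k q)) := by
    rw [macA_eq]
    exact (hT.pow 2).mul (AA_tendsto q hq k)
  have key3 : ∀ N, ∑' n, bb q N n * ww k n = qp q N ^ 2 * AA q N k := by
    intro N
    rw [finite_id q hq, tsum_eq_sum]
    intro n hn
    rw [bb_zero q (by simpa using hn), zero_mul]
  simp only [key3] at key
  have e := tendsto_nhds_unique key2 key
  have : P ^ 3 * macA k q = P * (P ^ 2 * macA k q) := by ring
  rw [this, e, ← tsum_mul_left]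
  refine tsum_congr fun n => ?_
  field_simp

lemma VV_eq (n k : ℕ) (h : k ≤ n) : ((2 * k + 1).factorial : ℂ) * VV n k =
    (2 * n + 1) * (((n + k).factorial : ℂ) / ((n - k).factorial : ℂ)) := by
  obtain ⟨d, rfl⟩ := Nat.exists_eq_add_of_le h
  have hd : k + d - k = d := by omega
  rw [hd]
  have hf : (d.factorial : ℂ) ≠ 0 := by exact_mod_cast d.factorial_ne_zero
  rw [← mul_div_assoc, eq_div_iff hf]
  have h1 := Nat.choose_mul_factorial_mul_factorial (show 2 * k + 1 ≤ k + d + k + 1 by omega)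
  have e1 : k + d + k + 1 - (2 * k + 1) = d := by omega
  rw [e1] at h1
  have h2 : (k + d + k).choose (2 * k + 1) * (2 * k + 1).factorial * d.factorial
      = d * (k + d + k).factorial := by
    rcases d with _ | d
    · rw [Nat.choose_eq_zero_of_lt (by omega)]; simp
    · have := Nat.choose_mul_factorial_mul_factorial
        (show 2 * k + 1 ≤ k + (d + 1) + k by omega)
      have e2 : k + (d + 1) + k - (2 * k + 1) = d := by omega
      rw [e2] at this
      rw [← this, Nat.factorial_succ d]; ring
  rw [Nat.factorial_succ (k + d + k)] at h1
  have : (2 * k + 1).factorial * VV (k + d) k * d.factorial =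
      (2 * (k + d) + 1) * (k + d + k).factorial := by
    unfold VV
    linarith
  exact_mod_cast this

lemma VV_lt (n k : ℕ) (h : n < k) : VV n k = 0 := by
  unfold VV
  rw [Nat.choose_eq_zero_of_lt (by omega), Nat.choose_eq_zero_of_lt (by omega)]

theorem stmt2 (k : ℕ) (hk : 1 ≤ k) (q : ℂ) (hq : ‖q‖ < 1) :
    ((2 * k + 1).factorial : ℂ) * (∏' m : ℕ, (1 - q ^ (m + 1))) ^ 3 * macA k q =
      (-1) ^ k * ∑' n : {n : ℕ // k ≤ n},
        (-1) ^ (n : ℕ) * (2 * (n : ℕ) + 1) *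
          ((((n : ℕ) + k).factorial : ℂ) / (((n : ℕ) - k).factorial : ℂ)) *
            q ^ (((n : ℕ) * ((n : ℕ) + 1)) / 2) := by
  rw [mul_assoc, limit_id q hq, ← tsum_mul_left, ← tsum_mul_left]
  have hs : Function.support (fun n : ℕ => ((2 * k + 1).factorial : ℂ) *
      ((-1) ^ n * q ^ tri n * ww k n)) ⊆ {n : ℕ | k ≤ n} := by
    intro n hn
    by_contra hlt
    apply hn
    simp only [Set.mem_ofPred_eq, not_le] at hlt
    simp [ww, VV_lt n k hlt]
  rw [← tsum_subtype_eq_of_support_subset hs]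
  refine tsum_congr fun n => ?_
  have h := VV_eq n.1 k n.2
  simp only [ww]
  rw [show (n : ℕ) * ((n : ℕ) + 1) / 2 = tri n from rfl]
  linear_combination (-1) ^ (n : ℕ) * q ^ tri n * (-1) ^ k * h
end

section
/- For every integer k ≥ 1, the functions C_k satisfy the recurrence C_k(q) = (1/(2k·(2k−1))) · ( (2·C_1(q) + (k−1)²)·C_{k−1}(q) − q·(d/dq)C_{k−1}(q) ) for all complex q with |q| < 1, where C_0(q) = 1 and the derivative is the complex derivative with respect to q. -/
namespace MacC
open Finset Filter Topology

/-- elementary symmetric sums -/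
noncomputable def es (a : ℕ → ℂ) (k : ℕ) (s : Finset ℕ) : ℂ :=
  ∑ t ∈ s.powersetCard k, ∏ i ∈ t, a i

lemma es_zero (a : ℕ → ℂ) (s : Finset ℕ) : es a 0 s = 1 := by simp [es]

lemma es_empty (a : ℕ → ℂ) (k : ℕ) : es a (k+1) ∅ = 0 := by
  rw [es, powersetCard_eq_empty.2 (by simp), sum_empty]

lemma es_insert (a : ℕ → ℂ) (k : ℕ) (s : Finset ℕ) (i : ℕ) (hi : i ∉ s) :
    es a (k+1) (insert i s) = es a (k+1) s + a i * es a k s := by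
  unfold es
  rw [powersetCard_succ_insert hi, sum_union, sum_image, mul_sum]
  · congr 1
    apply sum_congr rfl
    intro t ht
    rw [prod_insert]
    exact fun h => hi ((mem_powersetCard.1 ht).1 h)
  · intro t ht u hu h
    have h1 : i ∉ t := fun h => hi ((mem_powersetCard.1 ht).1 h)
    have h2 : i ∉ u := fun h => hi ((mem_powersetCard.1 hu).1 h)
    rw [← erase_insert h1, ← erase_insert h2, h]
  · rw [disjoint_left]
    intro t ht hu
    obtain ⟨u, hu, rfl⟩ := mem_image.1 hu
    exact hi ((mem_powersetCard.1 ht).1 (mem_insert_self _ _))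

lemma es_erase (a : ℕ → ℂ) (k : ℕ) (s : Finset ℕ) (i : ℕ) (hi : i ∈ s) :
    es a (k+1) s = es a (k+1) (s.erase i) + a i * es a k (s.erase i) := by
  conv_lhs => rw [← insert_erase hi]
  exact es_insert a k _ i (notMem_erase i s)

lemma es_one (a : ℕ → ℂ) (s : Finset ℕ) : es a 1 s = ∑ i ∈ s, a i := by
  simp [es, powersetCard_one]

/-- sum over removal, under insert -/
lemma D_insert_zero (a c : ℕ → ℂ) (s : Finset ℕ) :
    ∑ i ∈ s, c i * es a 0 (s.erase i) = ∑ i ∈ s, c i := by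
  simp [es_zero]

lemma D_insert (a c : ℕ → ℂ) (k : ℕ) (s : Finset ℕ) (j : ℕ) (hj : j ∉ s) :
    ∑ i ∈ insert j s, c i * es a (k+1) ((insert j s).erase i) =
      c j * es a (k+1) s + ∑ i ∈ s, c i * es a (k+1) (s.erase i)
        + a j * ∑ i ∈ s, c i * es a k (s.erase i) := by
  rw [sum_insert hj, erase_insert hj, add_assoc, mul_sum, ← sum_add_distrib]
  congr 1
  apply sum_congr rfl
  intro i hi
  have hij : j ≠ i := fun h => hj (h ▸ hi)
  rw [erase_insert_of_ne hij, es_insert]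
  · ring
  · exact fun h => hj (mem_of_mem_erase h)

lemma L1 (a : ℕ → ℂ) (s : Finset ℕ) : ∀ k : ℕ,
    ∑ i ∈ s, a i * es a k (s.erase i) = (k+1) * es a (k+1) s := by
  induction s using Finset.induction_on with
  | empty => intro k; simp [es_empty]
  | insert j s hj ih =>
    intro k
    cases k with
    | zero => simp [es_zero, es_one]
    | succ k =>
      rw [D_insert a a k s j hj, ih, ih, es_insert _ _ _ _ hj]
      push_cast; ring

lemma es_hasDerivAt (a : ℕ → ℂ → ℂ) (d : ℕ → ℂ) (q : ℂ) (s : Finset ℕ)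
    (h : ∀ i, HasDerivAt (a i) (d i) q) : ∀ k : ℕ,
    HasDerivAt (fun z => es (fun i => a i z) (k+1) s)
      (∑ i ∈ s, d i * es (fun i => a i q) k (s.erase i)) q := by
  induction s using Finset.induction_on with
  | empty => intro k; simpa [es_empty] using hasDerivAt_const q (0:ℂ)
  | insert j s hj ih =>
    intro k
    have e : (fun z => es (fun i => a i z) (k+1) (insert j s)) =
      fun z => es (fun i => a i z) (k+1) s + a j z * es (fun i => a i z) k s := by
      ext z; exact es_insert _ _ _ _ hj
    rw [e]
    cases k with
    | zero =>
      simp only [es_zero, mul_one]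
      have := (ih 0).add (h j)
      simp only [es_zero, mul_one] at this
      rw [sum_insert hj, add_comm (d j)]
      exact this
    | succ k =>
      rw [D_insert _ _ k s j hj]
      have := (ih (k+1)).add ((h j).mul (ih k))
      refine this.congr_deriv ?_
      ring

lemma L4 (a : ℕ → ℂ) (s : Finset ℕ) (k : ℕ) :
    es a 1 s * es a (k+1) s = (k+2) * es a (k+2) s + ∑ i ∈ s, a i ^ 2 * es a k (s.erase i) := by
  have := L1 a s (k+1)
  push_cast at this
  rw [show (k:ℂ) + 2 = k + 1 + 1 by ring, ← this, es_one, sum_mul, ← sum_add_distrib]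
  apply sum_congr rfl
  intro i hi
  rw [es_erase a k s i hi]; ring

lemma pair (a : ℕ → ℂ) (k : ℕ) (s : Finset ℕ) (i j : ℕ) (hi : i ∈ s) (hj : j ∈ s) (hij : i ≠ j) :
    a i * es a k (s.erase i) - a j * es a k (s.erase j) =
      (a i - a j) * es a k ((s.erase i).erase j) := by
  cases k with
  | zero => simp [es_zero]
  | succ k =>
    rw [es_erase a k (s.erase i) j (mem_erase.2 ⟨hij.symm, hj⟩),
      es_erase a k (s.erase j) i (mem_erase.2 ⟨hij, hi⟩), erase_right_comm (a := j)]
    ring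

lemma swap (s : Finset ℕ) (f : ℕ → ℕ → ℂ) :
    ∑ i ∈ s, ∑ j ∈ s.erase i, f i j = ∑ i ∈ s, ∑ j ∈ s.erase i, f j i := by
  apply sum_comm'
  intro x y
  simp only [mem_erase]
  tauto

lemma L2 (a : ℕ → ℂ) (t : ℕ → ℕ → ℂ) (s : Finset ℕ) (k : ℕ)
    (ht : ∀ i j, t j i = - t i j) (hta : ∀ i j, i ≠ j → t i j * (a i - a j) = a i * a j) :
    (k+2) * (k+1) * es a (k+2) s =
      2 * ∑ i ∈ s, a i * (∑ j ∈ s.erase i, t i j) * es a k (s.erase i) := by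
  have h1 := L1 a s (k+1)
  push_cast at h1
  have h2 : (k+2) * (k+1) * es a (k+2) s =
      ∑ i ∈ s, ∑ j ∈ s.erase i, a i * (a j * es a k ((s.erase i).erase j)) := by
    rw [show ((k:ℂ)+2) * (k+1) * es a (k+2) s = (k+1) * ((k+1+1) * es a (k+1+1) s) by ring,
      ← h1, mul_sum]
    apply sum_congr rfl
    intro i hi
    rw [← mul_sum, L1]; ring
  rw [h2]
  have h3 : ∑ i ∈ s, ∑ j ∈ s.erase i, a i * (a j * es a k ((s.erase i).erase j)) =
    ∑ i ∈ s, ∑ j ∈ s.erase i, t i j * (a i * es a k (s.erase i))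
     - ∑ i ∈ s, ∑ j ∈ s.erase i, t i j * (a j * es a k (s.erase j)) := by
    rw [← sum_sub_distrib]
    apply sum_congr rfl
    intro i hi
    rw [← sum_sub_distrib]
    apply sum_congr rfl
    intro j hj
    have hj' := mem_erase.1 hj
    rw [← mul_sub, pair a k s i j hi hj'.2 hj'.1.symm, ← mul_assoc, ← mul_assoc,
      hta i j hj'.1.symm]
  rw [h3, swap s (fun i j => t i j * (a j * es a k (s.erase j))), ← sum_sub_distrib, mul_sum]
  apply sum_congr rfl
  intro i hi
  rw [← sum_sub_distrib, mul_sum, sum_mul, mul_sum]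
  apply sum_congr rfl
  intro j hj
  rw [ht i j]; ring

lemma sumT (t : ℕ → ℕ → ℂ) (s : Finset ℕ) (ht : ∀ i j, t j i = - t i j) :
    ∑ i ∈ s, ∑ j ∈ s.erase i, t i j = 0 := by
  have h := swap s t
  rw [show ∑ i ∈ s, ∑ j ∈ s.erase i, t j i = - ∑ i ∈ s, ∑ j ∈ s.erase i, t i j by
    rw [← sum_neg_distrib]
    refine sum_congr rfl fun i _ => ?_
    rw [← sum_neg_distrib]
    exact sum_congr rfl fun j _ => ht i j] at h
  linear_combination h / 2

lemma L3 (a : ℕ → ℂ) (t : ℕ → ℕ → ℂ) (s : Finset ℕ) (k : ℕ)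
    (ht : ∀ i j, t j i = - t i j) (hta : ∀ i j, i ≠ j → t i j * (a i - a j) = a i * a j) :
    (k+1) * k * es a (k+1) s =
      - 2 * ∑ i ∈ s, (∑ j ∈ s.erase i, t i j) * es a k (s.erase i) := by
  cases k with
  | zero => simp [es_zero, sumT t s ht]
  | succ k =>
    have h := L2 a t s k ht hta
    push_cast
    rw [show (k:ℂ) + 1 + 1 = k + 2 by ring, h, neg_mul, ← mul_neg]
    congr 1
    have h0 : ∑ i ∈ s, (∑ j ∈ s.erase i, t i j) * es a (k+1) s = 0 := by
      rw [← sum_mul, sumT t s ht, zero_mul]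
    rw [eq_neg_iff_add_eq_zero, ← h0, ← sum_add_distrib]
    apply sum_congr rfl
    intro i hi
    rw [es_erase a k s i hi]; ring

lemma finite_identity (a c : ℕ → ℂ) (t : ℕ → ℕ → ℂ) (s : Finset ℕ) (k : ℕ)
    (ht : ∀ i j, t j i = - t i j) (hta : ∀ i j, i ≠ j → t i j * (a i - a j) = a i * a j) :
    ∑ i ∈ s, c i * es a k (s.erase i) - (2 * es a 1 s * es a (k+1) s + (k+1)^2 * es a (k+1) s
      - (2*k+4) * (2*k+3) * es a (k+2) s) =
    ∑ i ∈ s, (c i - 2 * a i ^ 2 - a i + 2 * (1 + 4 * a i) * ∑ j ∈ s.erase i, t i j)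
      * es a k (s.erase i) := by
  have e : ∑ i ∈ s, (c i - 2 * a i ^ 2 - a i + 2 * (1 + 4 * a i) * ∑ j ∈ s.erase i, t i j)
      * es a k (s.erase i) = ∑ i ∈ s, c i * es a k (s.erase i)
      - 2 * ∑ i ∈ s, a i ^ 2 * es a k (s.erase i) - ∑ i ∈ s, a i * es a k (s.erase i)
      + 2 * ∑ i ∈ s, (∑ j ∈ s.erase i, t i j) * es a k (s.erase i)
      + 8 * ∑ i ∈ s, a i * (∑ j ∈ s.erase i, t i j) * es a k (s.erase i) := by
    simp only [mul_sum (s := s), ← sum_sub_distrib, ← sum_add_distrib]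
    apply sum_congr rfl
    intro i hi
    ring
  rw [e]
  linear_combination (-2) * L4 a s k + L1 a s k - L3 a t s k ht hta + 4 * L2 a t s k ht hta


noncomputable def A (i : ℕ) (z : ℂ) : ℂ := z ^ (2 * i + 1) / (1 - z ^ (2 * i + 1)) ^ 2

lemma one_sub_ne {q : ℂ} (hq : ‖q‖ < 1) {n : ℕ} (hn : n ≠ 0) : 1 - q ^ n ≠ 0 := by
  intro h
  have h1 : q ^ n = 1 := (sub_eq_zero.1 h).symm
  have h2 : ‖q‖ ^ n < 1 := pow_lt_one₀ (norm_nonneg q) hq hn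
  rw [← norm_pow, h1, norm_one] at h2
  exact lt_irrefl _ h2

noncomputable def dA (i : ℕ) (q : ℂ) : ℂ :=
  (2 * i + 1) * q ^ (2 * i) * (1 + q ^ (2 * i + 1)) / (1 - q ^ (2 * i + 1)) ^ 3

lemma A_hasDerivAt {q : ℂ} (hq : ‖q‖ < 1) (i : ℕ) : HasDerivAt (A i) (dA i q) q := by
  have h0 : 1 - q ^ (2 * i + 1) ≠ 0 := one_sub_ne hq (by omega)
  have h1 := hasDerivAt_pow (2 * i + 1) q
  have h2 := h1.div ((h1.const_sub 1).pow 2) (pow_ne_zero 2 h0)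
  refine h2.congr_deriv ?_
  unfold dA
  simp only [Nat.add_sub_cancel]
  simp only [Pi.pow_apply]
  field_simp
  push_cast
  ring

noncomputable def g (q : ℂ) (p : ℕ) : ℂ := q ^ p / (1 - q ^ p)
noncomputable def w (q : ℂ) (i : ℕ) : ℂ := q ^ (2 * i + 1) / (1 - q ^ (2 * (2 * i + 1)))
noncomputable def tt (q : ℂ) (i j : ℕ) : ℂ := A i q * A j q / (A i q - A j q)

lemma A_sub {q : ℂ} (hq : ‖q‖ < 1) (i p : ℕ) : A i q - A (i + p + 1) q =
    q ^ (2 * i + 1) * (1 - q ^ (2 * (p + 1))) * (1 - q ^ (2 * (i + (i + p + 1) + 1))) /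
     ((1 - q ^ (2 * i + 1)) ^ 2 * (1 - q ^ (2 * (i + p + 1) + 1)) ^ 2) := by
  have h1 : 1 - q ^ (2 * i + 1) ≠ 0 := one_sub_ne hq (by omega)
  have h2 : 1 - q ^ (2 * (i + p + 1) + 1) ≠ 0 := one_sub_ne hq (by omega)
  unfold A
  rw [div_sub_div _ _ (pow_ne_zero 2 h1) (pow_ne_zero 2 h2)]
  congr 1
  ring

lemma A_sub_ne {q : ℂ} (hq : ‖q‖ < 1) (h0 : q ≠ 0) (i p : ℕ) : A i q - A (i + p + 1) q ≠ 0 := by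
  rw [A_sub hq]
  have h1 : 1 - q ^ (2 * i + 1) ≠ 0 := one_sub_ne hq (by omega)
  have h2 : 1 - q ^ (2 * (i + p + 1) + 1) ≠ 0 := one_sub_ne hq (by omega)
  have h3 : 1 - q ^ (2 * (p + 1)) ≠ 0 := one_sub_ne hq (by omega)
  have h4 : 1 - q ^ (2 * (i + (i + p + 1) + 1)) ≠ 0 := one_sub_ne hq (by omega)
  positivity

lemma tt_anti (q : ℂ) (i j : ℕ) : tt q j i = - tt q i j := by
  unfold tt
  rw [← div_neg, neg_sub, mul_comm]

lemma tt_mul {q : ℂ} (hq : ‖q‖ < 1) (h0 : q ≠ 0) (i j : ℕ) (hij : i ≠ j) :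
    tt q i j * (A i q - A j q) = A i q * A j q := by
  have : A i q - A j q ≠ 0 := by
    rcases lt_or_gt_of_ne hij with h | h
    · obtain ⟨p, rfl⟩ := Nat.exists_eq_add_of_lt h
      exact A_sub_ne hq h0 i p
    · obtain ⟨p, rfl⟩ := Nat.exists_eq_add_of_lt h
      rw [← neg_sub, neg_ne_zero]
      exact A_sub_ne hq h0 j p
  unfold tt
  field_simp

lemma tt_up {q : ℂ} (hq : ‖q‖ < 1) (h0 : q ≠ 0) (i p : ℕ) :
    tt q i (i + p + 1) = q ^ (2 * (i + p + 1) + 1) /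
      ((1 - q ^ (2 * (p + 1))) * (1 - q ^ (2 * (i + (i + p + 1) + 1)))) := by
  unfold tt
  rw [A_sub hq]
  have h1 : 1 - q ^ (2 * i + 1) ≠ 0 := one_sub_ne hq (by omega)
  have h2 : 1 - q ^ (2 * (i + p + 1) + 1) ≠ 0 := one_sub_ne hq (by omega)
  have h3 : 1 - q ^ (2 * (p + 1)) ≠ 0 := one_sub_ne hq (by omega)
  have h4 : 1 - q ^ (2 * (i + (i + p + 1) + 1)) ≠ 0 := one_sub_ne hq (by omega)
  have h5 := pow_ne_zero (2 * i + 1) h0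
  unfold A
  generalize 1 - q ^ (2 * (p + 1)) = x1 at *
  generalize 1 - q ^ (2 * (i + (i + p + 1) + 1)) = x2 at *
  generalize q ^ (2 * (i + p + 1) + 1) = x3 at *
  generalize q ^ (2 * i + 1) = x4 at *
  field_simp

lemma tt_gt {q : ℂ} (hq : ‖q‖ < 1) (h0 : q ≠ 0) (i p : ℕ) :
    tt q i (i + p + 1) = w q i * (g q (2 * (p + 1)) - g q (2 * (i + (i + p + 1) + 1))) := by
  rw [tt_up hq h0]
  have h1 : 1 - q ^ (2 * (2 * i + 1)) ≠ 0 := one_sub_ne hq (by omega)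
  have h3 : 1 - q ^ (2 * (p + 1)) ≠ 0 := one_sub_ne hq (by omega)
  have h4 : 1 - q ^ (2 * (i + (i + p + 1) + 1)) ≠ 0 := one_sub_ne hq (by omega)
  unfold w g
  rw [div_sub_div _ _ h3 h4, div_mul_div_comm, div_eq_div_iff (mul_ne_zero h3 h4)
    (mul_ne_zero h1 (mul_ne_zero h3 h4))]
  ring

lemma tt_lt {q : ℂ} (hq : ‖q‖ < 1) (h0 : q ≠ 0) (i p : ℕ) :
    tt q (i + p + 1) i = w q (i + p + 1) *
      (- g q (2 * (p + 1)) - 1 - g q (2 * (i + (i + p + 1) + 1))) := by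
  rw [tt_anti, tt_up hq h0]
  have h1 : 1 - q ^ (2 * (2 * (i + p + 1) + 1)) ≠ 0 := one_sub_ne hq (by omega)
  have h3 : 1 - q ^ (2 * (p + 1)) ≠ 0 := one_sub_ne hq (by omega)
  have h4 : 1 - q ^ (2 * (i + (i + p + 1) + 1)) ≠ 0 := one_sub_ne hq (by omega)
  unfold w g
  have e : - (q ^ (2 * (p + 1)) / (1 - q ^ (2 * (p + 1)))) - 1
      - q ^ (2 * (i + (i + p + 1) + 1)) / (1 - q ^ (2 * (i + (i + p + 1) + 1))) =
      - (1 - q ^ (2 * (p + 1)) * q ^ (2 * (i + (i + p + 1) + 1))) / 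
        ((1 - q ^ (2 * (p + 1))) * (1 - q ^ (2 * (i + (i + p + 1) + 1)))) := by
    generalize q ^ (2 * (p + 1)) = x at *
    generalize q ^ (2 * (i + (i + p + 1) + 1)) = y at *
    field_simp
    ring
  rw [e, div_mul_div_comm, ← neg_div, div_eq_div_iff (mul_ne_zero h3 h4)
    (mul_ne_zero h1 (mul_ne_zero h3 h4))]
  ring

lemma T_base {q : ℂ} (hq : ‖q‖ < 1) (h0 : q ≠ 0) (i : ℕ) :
    ∑ j ∈ range i, tt q i j = w q i * (- i - ∑ l ∈ range (2 * i), g q (2 * (l + 1))) := by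
  have h : ∀ j ∈ range i, tt q i j = w q i * (- g q (2 * (i - 1 - j + 1)) - 1 - g q (2 * (i + j + 1))) := by
    intro j hj
    obtain ⟨p, rfl⟩ := Nat.exists_eq_add_of_lt (mem_range.1 hj)
    rw [tt_lt hq h0, show j + p + 1 - 1 - j + 1 = p + 1 by omega,
      show j + (j + p + 1) + 1 = j + p + 1 + j + 1 by omega]
  rw [sum_congr rfl h, ← mul_sum, two_mul, sum_range_add, sum_sub_distrib, sum_sub_distrib,
    sum_neg_distrib, sum_range_reflect (fun x => g q (2 * (x + 1)))]
  simp
  left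
  ring

lemma T_formula {q : ℂ} (hq : ‖q‖ < 1) (h0 : q ≠ 0) (i p : ℕ) :
    ∑ j ∈ (range (i + p + 1)).erase i, tt q i j =
      w q i * (g q (2 * (2 * i + 1)) - i) -
        w q i * ∑ l ∈ range (2 * i + 1), g q (2 * (p + 1 + l)) := by
  induction p with
  | zero =>
    have : (range (i + 0 + 1)).erase i = range i := by ext; simp; omega
    rw [this, T_base hq h0]
    have e : ∑ l ∈ range (2 * i + 1), g q (2 * (0 + 1 + l)) =
        ∑ l ∈ range (2 * i), g q (2 * (l + 1)) + g q (2 * (2 * i + 1)) := by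
      rw [sum_range_succ]
      simp only [Nat.zero_add, Nat.add_comm]
    rw [e]
    ring
  | succ p ih =>
    have : (range (i + (p + 1) + 1)).erase i = insert (i + p + 1) ((range (i + p + 1)).erase i) := by
      ext; simp; omega
    rw [this, sum_insert (by simp), ih, tt_gt hq h0]
    have e1 := sum_range_succ (fun l => g q (2 * (p + 1 + l))) (2 * i + 1)
    have e2 := sum_range_succ' (fun l => g q (2 * (p + 1 + l))) (2 * i + 1)
    have e3 : ∑ l ∈ range (2 * i + 1), g q (2 * (p + 1 + (l + 1))) =
        ∑ l ∈ range (2 * i + 1), g q (2 * (p + 1 + 1 + l)) :=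
      sum_congr rfl fun l _ => by rw [show p + 1 + (l + 1) = p + 1 + 1 + l by ring]
    rw [e3] at e2
    rw [show i + (i + p + 1) + 1 = p + 1 + (2 * i + 1) by ring]
    simp only [add_zero] at e2
    linear_combination w q i * (e1 - e2)

lemma local_identity {q : ℂ} (hq : ‖q‖ < 1) (i : ℕ) :
    q * dA i q - 2 * A i q ^ 2 - A i q
      + 2 * (1 + 4 * A i q) * (w q i * (g q (2 * (2 * i + 1)) - i)) = 0 := by
  have h1 : 1 - q ^ (2 * i + 1) ≠ 0 := one_sub_ne hq (by omega)
  have h2 : 1 - q ^ (2 * (2 * i + 1)) ≠ 0 := one_sub_ne hq (by omega)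
  unfold dA A w g
  have e : q * ((2 * i + 1) * q ^ (2 * i) * (1 + q ^ (2 * i + 1)) / (1 - q ^ (2 * i + 1)) ^ 3)
    = ((2 * i + 1) * q ^ (2 * i + 1) * (1 + q ^ (2 * i + 1)) / (1 - q ^ (2 * i + 1)) ^ 3) := by
    ring
  have e2 : q ^ (2 * (2 * i + 1)) = (q ^ (2 * i + 1)) ^ 2 := by ring
  rw [e, e2]
  rw [e2] at h2
  generalize q ^ (2 * i + 1) = Q at *
  have h3 : 1 + Q ≠ 0 := by
    intro h; apply h2; linear_combination (1 - Q) * h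
  have e3 : 1 - Q ^ 2 = (1 - Q) * (1 + Q) := by ring
  rw [e3]
  field_simp
  ring

lemma norm_one_sub_ge {z : ℂ} {r : ℝ} (hr : r < 1) (hz : ‖z‖ ≤ r) {n : ℕ} (hn : n ≠ 0) :
    1 - r ≤ ‖1 - z ^ n‖ := by
  have h1 : ‖z ^ n‖ ≤ r := by
    rw [norm_pow]
    calc ‖z‖ ^ n ≤ ‖z‖ := pow_le_of_le_one (norm_nonneg _) (hz.trans hr.le) hn
      _ ≤ r := hz
  have h2 := norm_sub_norm_le (1 : ℂ) (z ^ n)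
  rw [norm_one] at h2
  linarith

lemma norm_A_le {z : ℂ} {r : ℝ} (hr : r < 1) (hz : ‖z‖ ≤ r) (i : ℕ) :
    ‖A i z‖ ≤ r ^ (2 * i + 1) / (1 - r) ^ 2 := by
  unfold A
  rw [norm_div, norm_pow, norm_pow]
  have h := norm_one_sub_ge hr hz (n := 2 * i + 1) (by omega)
  have h1 : 0 < 1 - r := by linarith
  have hr0 : 0 ≤ r := (norm_nonneg z).trans hz
  gcongr

lemma norm_g_le {z : ℂ} {r : ℝ} (hr : r < 1) (hz : ‖z‖ ≤ r) {n : ℕ} (hn : n ≠ 0) :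
    ‖g z n‖ ≤ r ^ n / (1 - r) := by
  unfold g
  rw [norm_div, norm_pow]
  have h := norm_one_sub_ge hr hz hn
  have h1 : 0 < 1 - r := by linarith
  have hr0 : 0 ≤ r := (norm_nonneg z).trans hz
  gcongr

lemma norm_w_le {z : ℂ} {r : ℝ} (hr : r < 1) (hz : ‖z‖ ≤ r) (i : ℕ) :
    ‖w z i‖ ≤ r ^ (2 * i + 1) / (1 - r) := by
  unfold w
  rw [norm_div, norm_pow]
  have h := norm_one_sub_ge hr hz (n := 2 * (2 * i + 1)) (by omega)
  have h1 : 0 < 1 - r := by linarith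
  have hr0 : 0 ≤ r := (norm_nonneg z).trans hz
  gcongr

lemma summable_u {r : ℝ} (hr0 : 0 ≤ r) (hr : r < 1) :
    Summable (fun s : Finset ℕ => ∏ i ∈ s, r ^ (2 * i + 1) / (1 - r) ^ 2) := by
  apply summable_finsetProd_of_summable_nonneg
  · intro i
    have : 0 < 1 - r := by linarith
    positivity
  · apply Summable.div_const
    have h : Summable (fun i : ℕ => r ^ i) := summable_geometric_of_lt_one hr0 hr
    exact h.comp_injective (fun a b h => by simpa using h)

lemma macC_eq (k : ℕ) (q : ℂ) :
    macC k q = ∑' s : Finset ℕ, if s.card = k then ∏ i ∈ s, A i q else 0 := by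
  let G : {m : Fin k → ℕ // StrictMono m ∧ ∀ i, 0 < m i} → Finset ℕ :=
    fun m => univ.image (fun i => m.1 i - 1)
  have hmono : ∀ m : {m : Fin k → ℕ // StrictMono m ∧ ∀ i, 0 < m i},
      StrictMono (fun i => m.1 i - 1) := by
    intro m i j hij
    have h1 := m.2.1 hij
    have h2 := m.2.2 i
    show m.1 i - 1 < m.1 j - 1
    omega
  have hG : Function.Injective G := by
    intro m m' h
    have h1 : Set.range (fun i => m.1 i - 1) = Set.range (fun i => m'.1 i - 1) := by
      have := congrArg (fun s : Finset ℕ => (s : Set ℕ)) h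
      simpa [G] using this
    have h2 := ((hmono m).range_inj (hmono m')).1 h1
    apply Subtype.ext
    ext i
    have h3 := congrFun h2 i
    have h4 := m.2.2 i
    have h5 := m'.2.2 i
    omega
  rw [← hG.tsum_eq]
  · unfold macC
    apply tsum_congr
    intro m
    have hc : (G m).card = k := by
      rw [card_image_of_injective _ (hmono m).injective]; simp
    rw [if_pos hc, prod_image (fun i _ j _ h => (hmono m).injective h), ← prod_pow_eq_pow_sum,
      ← prod_div_distrib]
    apply prod_congr rfl
    intro i _
    have h4 := m.2.2 i
    unfold A
    rw [show 2 * (m.1 i - 1) + 1 = 2 * m.1 i - 1 by omega]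
  · intro s hs
    have hc : s.card = k := by
      by_contra h
      simp [h] at hs
    refine ⟨⟨fun i => s.orderEmbOfFin hc i + 1, ?_, fun i => Nat.succ_pos _⟩, ?_⟩
    · intro i j hij
      have := (s.orderEmbOfFin hc).strictMono hij
      show _ + 1 < _ + 1
      omega
    · apply Finset.coe_injective
      simp [G]

lemma es_eq (a : ℕ → ℂ) (k : ℕ) (s : Finset ℕ) :
    es a k s = ∑ t ∈ s.powerset, if t.card = k then ∏ i ∈ t, a i else 0 := by
  rw [es, powersetCard_eq_filter, sum_filter]

lemma unif (k : ℕ) {r : ℝ} (hr0 : 0 ≤ r) (hr : r < 1) :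
    TendstoUniformlyOn (fun N z => es (fun i => A i z) k (range N)) (macC k) atTop
      (Metric.ball 0 r) := by
  have h := tendstoUniformlyOn_tsum (summable_u hr0 hr) (s := Metric.ball (0:ℂ) r)
    (f := fun s z => if s.card = k then ∏ i ∈ s, A i z else 0) (by
      intro s z hz
      have hz' : ‖z‖ ≤ r := by simpa using (Metric.mem_ball.1 hz).le
      have h1 : 0 < 1 - r := by linarith
      split_ifs
      · rw [norm_prod]
        exact prod_le_prod (fun _ _ => norm_nonneg _) (fun i _ => norm_A_le hr hz' i)
      · rw [norm_zero]
        exact prod_nonneg fun i _ => by positivity)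
  have h2 : (fun z => ∑' s : Finset ℕ, if s.card = k then ∏ i ∈ s, A i z else 0) = macC k := by
    ext z; exact (macC_eq k z).symm
  rw [h2] at h
  intro v hv
  have := (tendsto_finset_powerset_atTop_atTop.comp tendsto_finset_range).eventually (h v hv)
  filter_upwards [this] with N hN z hz
  rw [es_eq]
  exact hN z hz

lemma norm_es_le {q : ℂ} (hq : ‖q‖ < 1) (k : ℕ) (s : Finset ℕ) :
    ‖es (fun i => A i q) k s‖ ≤
      ∑' s : Finset ℕ, ∏ i ∈ s, ‖q‖ ^ (2 * i + 1) / (1 - ‖q‖) ^ 2 := by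
  have h1 : 0 < 1 - ‖q‖ := by linarith
  rw [es]
  refine (norm_sum_le _ _).trans ?_
  refine le_trans (sum_le_sum fun t _ => ?_) ((summable_u (norm_nonneg q) hq).sum_le_tsum
    (s.powersetCard k) fun t _ => prod_nonneg fun i _ => by positivity)
  rw [norm_prod]
  exact prod_le_prod (fun _ _ => norm_nonneg _) (fun i _ => norm_A_le hq le_rfl i)

lemma error_le {q : ℂ} (hq : ‖q‖ < 1) (k N i : ℕ) (hi : i < N) (h0 : q ≠ 0) (B : ℝ)
    (hB : ∀ s, ‖es (fun i => A i q) k s‖ ≤ B) :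
    ‖(q * dA i q - 2 * A i q ^ 2 - A i q + 2 * (1 + 4 * A i q) *
      ∑ j ∈ (range N).erase i, tt q i j) * es (fun i => A i q) k ((range N).erase i)‖ ≤
    2 * (1 + 4 / (1 - ‖q‖) ^ 2) * ((2 * N + 1) * (‖q‖ ^ N / (1 - ‖q‖) ^ 2)) * B := by
  have h1 : 0 < 1 - ‖q‖ := by linarith
  obtain ⟨p, rfl⟩ := Nat.exists_eq_add_of_lt hi
  rw [T_formula hq h0]
  have e : q * dA i q - 2 * A i q ^ 2 - A i q + 2 * (1 + 4 * A i q) *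
      (w q i * (g q (2 * (2 * i + 1)) - i) -
        w q i * ∑ l ∈ range (2 * i + 1), g q (2 * (p + 1 + l))) =
      -(2 * (1 + 4 * A i q) * (∑ l ∈ range (2 * i + 1), w q i * g q (2 * (p + 1 + l)))) := by
    rw [← mul_sum]
    linear_combination local_identity hq i
  rw [e, norm_mul, norm_neg, norm_mul, norm_mul]
  have b1 : ‖(2:ℂ)‖ = 2 := by simp
  have b2 : ‖1 + 4 * A i q‖ ≤ 1 + 4 / (1 - ‖q‖) ^ 2 := by
    refine (norm_add_le _ _).trans ?_
    rw [norm_one, norm_mul]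
    have := norm_A_le hq le_rfl i
    have h3 : ‖q‖ ^ (2 * i + 1) / (1 - ‖q‖) ^ 2 ≤ 1 / (1 - ‖q‖) ^ 2 := by
      gcongr
      exact pow_le_one₀ (norm_nonneg _) hq.le
    have h4 : ‖(4:ℂ)‖ = 4 := by simp
    rw [h4, show (4:ℝ) / (1 - ‖q‖) ^ 2 = 4 * (1 / (1 - ‖q‖) ^ 2) by ring]
    linarith
  have b3 : ‖∑ l ∈ range (2 * i + 1), w q i * g q (2 * (p + 1 + l))‖ ≤
      (2 * (i + p + 1 : ℕ) + 1) * (‖q‖ ^ (i + p + 1) / (1 - ‖q‖) ^ 2) := by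
    have h5 : ∀ l ∈ range (2 * i + 1), ‖w q i * g q (2 * (p + 1 + l))‖ ≤
        ‖q‖ ^ (i + p + 1) / (1 - ‖q‖) ^ 2 := by
      intro l _
      rw [norm_mul]
      calc _ ≤ (‖q‖ ^ (2 * i + 1) / (1 - ‖q‖)) * (‖q‖ ^ (2 * (p + 1 + l)) / (1 - ‖q‖)) := by
            have := norm_w_le hq le_rfl i
            have := norm_g_le hq le_rfl (n := 2 * (p + 1 + l)) (by omega)
            gcongr
        _ = ‖q‖ ^ (2 * i + 1 + 2 * (p + 1 + l)) / (1 - ‖q‖) ^ 2 := by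
            rw [pow_add _ (2 * i + 1), div_mul_div_comm, sq (1 - ‖q‖)]
        _ ≤ _ := by
            gcongr ?_ / _
            exact pow_le_pow_of_le_one (norm_nonneg _) hq.le (by omega)
    refine (norm_sum_le_of_le _ h5).trans ?_
    rw [sum_const, card_range, nsmul_eq_mul]
    gcongr
    push_cast
    have : (0:ℝ) ≤ p := by positivity
    linarith
  rw [b1]
  have hB' := hB ((range (i + p + 1)).erase i)
  gcongr

lemma error_tendsto {q : ℂ} (hq : ‖q‖ < 1) (h0 : q ≠ 0) (k : ℕ) :
    Tendsto (fun N : ℕ => ∑ i ∈ range N, (q * dA i q - 2 * A i q ^ 2 - A i q +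
      2 * (1 + 4 * A i q) * ∑ j ∈ (range N).erase i, tt q i j) *
        es (fun i => A i q) k ((range N).erase i)) atTop (𝓝 0) := by
  have hB := norm_es_le hq k
  set B := ∑' s : Finset ℕ, ∏ i ∈ s, ‖q‖ ^ (2 * i + 1) / (1 - ‖q‖) ^ 2
  refine squeeze_zero_norm (a := fun N : ℕ => (2 * (1 + 4 / (1 - ‖q‖) ^ 2) * B / (1 - ‖q‖) ^ 2) *
    (2 * ((N:ℝ) ^ 2 * ‖q‖ ^ N) + (N:ℝ) ^ 1 * ‖q‖ ^ N)) ?_ ?_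
  · intro N
    refine (norm_sum_le_of_le _ fun i hi =>
      error_le hq k N i (mem_range.1 hi) h0 B hB).trans ?_
    rw [sum_const, card_range, nsmul_eq_mul]
    apply le_of_eq
    ring
  · have h : |‖q‖| < 1 := by rwa [abs_norm]
    have h2 := tendsto_pow_const_mul_const_pow_of_abs_lt_one 2 h
    have h1 := tendsto_pow_const_mul_const_pow_of_abs_lt_one 1 h
    simpa using ((h2.const_mul 2).add h1).const_mul
      (2 * (1 + 4 / (1 - ‖q‖) ^ 2) * B / (1 - ‖q‖) ^ 2)

lemma tendsto_es {q : ℂ} (hq : ‖q‖ < 1) (k : ℕ) :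
    Tendsto (fun N => es (fun i => A i q) k (range N)) atTop (𝓝 (macC k q)) := by
  obtain ⟨r, hr1, hr2⟩ := exists_between hq
  exact (unif k ((norm_nonneg q).trans hr1.le) hr2).tendsto_at (by simpa using hr1)

lemma tendsto_deriv {q : ℂ} (hq : ‖q‖ < 1) (k : ℕ) :
    Tendsto (fun N => ∑ i ∈ range N, dA i q * es (fun i => A i q) k ((range N).erase i)) atTop
      (𝓝 (deriv (macC (k+1)) q)) := by
  obtain ⟨r, hr1, hr2⟩ := exists_between hq
  have h := (unif (k+1) ((norm_nonneg q).trans hr1.le) hr2).tendstoLocallyUniformlyOn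
  have hd : ∀ (N : ℕ) (z : ℂ), ‖z‖ < 1 →
      HasDerivAt (fun z => es (fun i => A i z) (k+1) (range N))
      (∑ i ∈ range N, dA i z * es (fun i => A i z) k ((range N).erase i)) z := fun N z hz =>
    es_hasDerivAt A (fun i => dA i z) z (range N) (fun i => A_hasDerivAt hz i) k
  have h2 := h.deriv (Eventually.of_forall fun N z hz =>
    (hd N z ((by simpa using hz : ‖z‖ < r).trans hr2)).differentiableAt.differentiableWithinAt)
    Metric.isOpen_ball
  have h3 := h2.tendsto_at (a := q) (by simpa using hr1)
  refine h3.congr fun N => ?_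
  exact (hd N q hq).deriv

lemma main {q : ℂ} (hq : ‖q‖ < 1) (h0 : q ≠ 0) (k : ℕ) :
    q * deriv (macC (k+1)) q = 2 * macC 1 q * macC (k+1) q + (k+1)^2 * macC (k+1) q
      - (2*k+4) * (2*k+3) * macC (k+2) q := by
  have h := error_tendsto hq h0 k
  have e : ∀ N : ℕ, _ := fun N => finite_identity (fun i => A i q) (fun i => q * dA i q) (tt q)
    (range N) k (tt_anti q) (tt_mul hq h0)
  simp only [← e] at h
  have h1 := (tendsto_deriv hq k).const_mul q
  have h2 := ((((tendsto_es hq 1).const_mul 2).mul (tendsto_es hq (k+1))).add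
    ((tendsto_es hq (k+1)).const_mul (((k:ℂ)+1)^2))).sub
    ((tendsto_es hq (k+2)).const_mul ((2*(k:ℂ)+4) * (2*k+3)))
  have h3 := h1.sub h2
  simp only [mul_sum, ← mul_assoc] at h3 h
  exact sub_eq_zero.1 (tendsto_nhds_unique h3 h)

lemma macC_zero (q : ℂ) : macC 0 q = 1 := by
  rw [macC_eq, tsum_eq_single ∅]
  · simp
  · intro s hs
    simp [hs]

lemma macC_at_zero (k : ℕ) : macC (k+1) 0 = 0 := by
  rw [macC_eq]
  convert tsum_zero with s
  split_ifs with h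
  · obtain ⟨i, hi⟩ : s.Nonempty := card_pos.1 (by omega)
    exact prod_eq_zero hi (by simp [A])
  · rfl

end MacC

theorem stmt5 (k : ℕ) (hk : 1 ≤ k) (q : ℂ) (hq : ‖q‖ < 1) :
    macC k q = (1 / ((2 * (k : ℂ)) * (2 * (k : ℂ) - 1))) *
      ((2 * macC 1 q + ((k : ℂ) - 1) ^ 2) * macC (k - 1) q
        - q * deriv (macC (k - 1)) q) := by
  obtain ⟨k, rfl⟩ : ∃ l, k = l + 1 := ⟨k - 1, by omega⟩
  rw [Nat.add_sub_cancel]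
  cases k with
  | zero =>
    have : macC 0 = fun _ => 1 := funext MacC.macC_zero
    simp [this]
    ring
  | succ k =>
    have n1 : (2 * (k:ℂ) + 4) ≠ 0 := by
      exact_mod_cast (by omega : 2 * k + 4 ≠ 0)
    have n2 : (2 * (k:ℂ) + 3) ≠ 0 := by
      exact_mod_cast (by omega : 2 * k + 3 ≠ 0)
    by_cases h0 : q = 0
    · subst h0
      simp [MacC.macC_at_zero]
    · have h := MacC.main hq h0 k
      rw [h]
      push_cast
      rw [show 2 * ((k:ℂ) + 1 + 1) = 2 * k + 4 by ring,
        show 2 * (k:ℂ) + 4 - 1 = 2 * k + 3 by ring]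
      field_simp
      ring
end
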